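/- arXiv:1612.02960 — 6 statements merged into one kernel-verified Lean document; each statement's English description precedes it below -/
import Mathlib

section
/- For all integers a, b, c ≥ 2, the triangle group T(a,b,c) possesses a normal subgroup N of finite index such that N is torsion-free. -/
/-- Relator set of the triangle group `T(a,b,c)`: the relators `x^a`, `y^b`, `z^c`
and `x·y·z` in the free group on three generators `x, y, z`. -/
def TriangleRels (a b c : ℕ) : Set (FreeGroup (Fin 3)) :=
  {FreeGroup.of 0 ^ a, FreeGroup.of 1 ^ b, FreeGroup.of 2 ^ c,
    FreeGroup.of 0 * FreeGroup.of 1 * FreeGroup.of 2}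

/-- The triangle group `T(a,b,c)`. -/
abbrev TriangleGroup (a b c : ℕ) : Type :=
  PresentedGroup (TriangleRels a b c)

/-!
The triangle group `T(a,b,c)` is the rotation subgroup of the Coxeter group generated by the
reflections in the sides of a triangle with angles `π / a`, `π / b`, `π / c`. To see that `T(a,b,c)`
embeds there, extend it by the automorphism `x ↦ x⁻¹`, `y ↦ y⁻¹`, which plays the role of one of
the reflections; this extension is a quotient of the Coxeter group in which `T(a,b,c)` survives.

By Tits, a Coxeter group acts faithfully by reflections on the span of its simple roots. The matrix
entries of this action lie in the ring generated by the numbers `2 cos (π / m)`. These are algebraic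
integers, so for finitely many generators the ring is free of finite rank over `ℤ`, and the group
embeds in some `GLₙ(ℤ)`. Finally, by Minkowski, the kernel of reduction modulo `3` is a torsion-free
normal subgroup of finite index in `GLₙ(ℤ)`.
-/

/-- A group is virtually torsion-free if it has a torsion-free normal subgroup of finite index.
Asking for normality costs nothing, since one can pass to the normal core. Torsion-freeness is
spelled out because `IsMulTorsionFree` is the stronger condition of uniqueness of roots. -/
def IsVirtuallyTorsionFree (G : Type*) [Group G] : Prop :=
  ∃ N : Subgroup G, N.Normal ∧ N.index ≠ 0 ∧ ∀ x ∈ N, IsOfFinOrder x → x = 1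

theorem IsVirtuallyTorsionFree.of_injective {G H : Type*} [Group G] [Group H]
    (hH : IsVirtuallyTorsionFree H) {f : G →* H} (hf : Function.Injective f) :
    IsVirtuallyTorsionFree G := by
  obtain ⟨N, hN, hindex, htorsion⟩ := hH
  refine ⟨N.comap f, inferInstance, ?_, fun x hx hfin ↦ ?_⟩
  · rw [Subgroup.index_comap]
    exact ne_zero_of_dvd_ne_zero hindex (N.relIndex_dvd_index_of_normal f.range)
  · exact hf ((htorsion (f x) hx (f.isOfFinOrder hfin)).trans (map_one f).symm)

section Minkowski

theorem exists_one_add_pow_eq {R : Type*} [Ring R] (x : R) (n : ℕ) :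
    ∃ r, (1 + x) ^ n = 1 + n • x + n.choose 2 • x ^ 2 + x ^ 3 * r := by
  induction n with
  | zero => exact ⟨0, by simp⟩
  | succ n ih =>
    obtain ⟨r, hr⟩ := ih
    have hchoose : (n + 1).choose 2 = n + n.choose 2 := by
      rw [Nat.choose_succ_succ' n 1, Nat.choose_one_right]
    refine ⟨n.choose 2 • 1 + r + r * x, ?_⟩
    rw [pow_succ, hr, hchoose, succ_nsmul, add_nsmul _ n]
    noncomm_ring

theorem exists_eq_smul_of_smul_eq_smul_of_coprime {L : Type*} [AddCommGroup L] {k q : ℕ}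
    (hqk : q.Coprime k) {y w : L} (h : q • y = k • w) : ∃ z, y = k • z := by
  obtain ⟨u, v, huv⟩ := Nat.isCoprime_iff_coprime.mpr hqk
  refine ⟨u • w + v • y, ?_⟩
  calc y = (u * q + v * k) • y := by rw [huv, one_smul]
    _ = u • q • y + v • k • y := by module
    _ = k • (u • w + v • y) := by rw [h]; module

section TorsionFreeRing

variable {R : Type*} [Ring R] [IsAddTorsionFree R] {d p : ℕ} {y : R}

theorem exists_smul_eq_of_one_add_smul_pow_eq_one (hd : d ≠ 0) (h : (1 + d • y) ^ p = 1) :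
    ∃ r, p • y = d • -(p.choose 2 • y ^ 2 + d • (y ^ 3 * r)) := by
  obtain ⟨r, hr⟩ := exists_one_add_pow_eq (d • y) p
  refine ⟨r, nsmul_right_injective hd ?_⟩
  rw [h, smul_pow, smul_pow, smul_mul_assoc] at hr
  rw [← sub_eq_zero] at hr ⊢
  rw [← neg_eq_zero, ← hr]
  match_scalars <;> ring

theorem exists_eq_smul_of_one_add_smul_pow_eq_one (hd : 3 ≤ d) (hp : p.Prime)
    (h : (1 + d • y) ^ p = 1) : ∃ k > 1, ∃ z, y = k • z := by
  obtain ⟨r, hr⟩ := exists_smul_eq_of_one_add_smul_pow_eq_one (by lia) h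
  by_cases hpd : p ∣ d
  · obtain ⟨e, rfl⟩ := hpd
    rw [mul_smul] at hr
    replace hr := nsmul_right_injective hp.ne_zero hr
    obtain rfl | he := eq_or_ne e 1
    · rw [mul_one] at hd hr
      obtain ⟨t, ht⟩ := hp.dvd_choose_self two_ne_zero hd
      refine ⟨p, hp.one_lt, -(t • y ^ 2 + y ^ 3 * r), ?_⟩
      rw [one_smul, ht] at hr
      nth_rw 1 [hr]
      module
    · have he0 : e ≠ 0 := by rintro rfl; lia
      exact ⟨e, by lia, _, hr⟩
  · exact ⟨d, by lia, exists_eq_smul_of_smul_eq_smul_of_coprime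
      ((hp.coprime_iff_not_dvd).mpr hpd) hr⟩

theorem exists_ge_smul_eq_smul_of_one_add_smul_pow_eq_one (hd : 3 ≤ d) (hp : p.Prime)
    (h : (1 + d • y) ^ p = 1) (m : ℕ) : ∃ k ≥ m + 3, ∃ z, d • y = k • z := by
  induction m with
  | zero => exact ⟨d, hd, y, rfl⟩
  | succ m ih =>
    obtain ⟨k, hk, z, hz⟩ := ih
    rw [hz] at h ⊢
    obtain ⟨q, hq, w, rfl⟩ := exists_eq_smul_of_one_add_smul_pow_eq_one (by lia) hp h
    exact ⟨k * q, by nlinarith, w, (mul_smul k q w).symm⟩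

end TorsionFreeRing

theorem eq_zero_of_forall_exists_ge_eq_smul {L : Type*} [AddCommGroup L] [Module.Free ℤ L] {y : L}
    (h : ∀ m : ℕ, ∃ k ≥ m, ∃ z, y = k • z) : y = 0 := by
  let b := Module.Free.chooseBasis ℤ L
  refine b.ext_elem fun i ↦ ?_
  obtain ⟨k, hk, z, hz⟩ := h ((b.repr y i).natAbs + 1)
  rw [map_zero, Finsupp.zero_apply]
  refine Int.eq_zero_of_abs_lt_dvd (m := k) ⟨b.repr z i, ?_⟩ (by rw [Int.abs_eq_natAbs]; lia)
  rw [hz, map_nsmul, Finsupp.smul_apply, nsmul_eq_mul]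

section FreeRing

variable {R : Type*} [Ring R] [Module.Free ℤ R] {a c : R} {d p : ℕ}

theorem eq_one_of_prime_pow_eq_one_of_eq_one_add_smul (hd : 3 ≤ d) (hp : p.Prime)
    (ha : a ^ p = 1) (hc : a = 1 + d • c) : a = 1 := by
  have : IsAddTorsionFree R := .of_isTorsionFree ℤ R
  rw [hc, add_eq_left]
  refine eq_zero_of_forall_exists_ge_eq_smul fun m ↦ ?_
  obtain ⟨k, hk, hcz⟩ := exists_ge_smul_eq_smul_of_one_add_smul_pow_eq_one hd hp (hc ▸ ha) m
  exact ⟨k, by lia, hcz⟩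

theorem eq_one_of_isOfFinOrder_of_eq_one_add_smul (hd : 3 ≤ d) (ha : IsOfFinOrder a)
    (hc : a = 1 + d • c) : a = 1 := by
  by_contra hne
  obtain ⟨p, hp, hdvd⟩ := Nat.exists_prime_and_dvd (mt orderOf_eq_one_iff.mp hne)
  have hord : orderOf (a ^ (orderOf a / p)) = p :=
    orderOf_pow_orderOf_div ha.orderOf_pos.ne' hdvd
  have hone : a ^ (orderOf a / p) = 1 := by
    refine eq_one_of_prime_pow_eq_one_of_eq_one_add_smul
      (c := c * ∑ i ∈ .range (orderOf a / p), a ^ i) hd hp ?_ ?_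
    · rw [← pow_mul, Nat.div_mul_cancel hdvd, pow_orderOf_eq_one]
    · rw [← smul_mul_assoc, ← sub_eq_iff_eq_add'.mpr hc, mul_geom_sum, add_sub_cancel]
  rw [hone, orderOf_one] at hord
  exact hp.one_lt.ne hord

end FreeRing

open Matrix in
theorem isVirtuallyTorsionFree_generalLinearGroup_int (n : Type*) [Fintype n] [DecidableEq n] :
    IsVirtuallyTorsionFree (GL n ℤ) := by
  let reduction := GeneralLinearGroup.map (n := n) (Int.castRingHom (ZMod 3))
  refine ⟨reduction.ker, inferInstance, (Subgroup.finiteIndex_ker reduction).index_ne_zero,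
    fun A hA hfin ↦ Units.ext ?_⟩
  have hmod : (Int.castRingHom (ZMod 3)).mapMatrix (A.val - 1) = 0 := by
    rw [map_sub, map_one, sub_eq_zero]
    exact congrArg Units.val (reduction.mem_ker.mp hA)
  have hdvd i j : (3 : ℤ) ∣ (A.val - 1) i j :=
    (ZMod.intCast_zmod_eq_zero_iff_dvd _ 3).mp (congr_fun₂ hmod i j)
  choose C hC using hdvd
  have hA' : A.val = 1 + 3 • of C := by
    rw [← sub_eq_iff_eq_add']
    ext i j
    simpa using hC i j
  exact eq_one_of_isOfFinOrder_of_eq_one_add_smul le_rfl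
    ((Units.coeHom _).isOfFinOrder hfin) hA'

end Minkowski

theorem IsVirtuallyTorsionFree.of_faithfulSMul (G L : Type*) [Group G] [AddCommGroup L]
    [Module.Finite ℤ L] [Module.Free ℤ L] [DistribMulAction G L] [FaithfulSMul G L] :
    IsVirtuallyTorsionFree G := by
  classical
  let toMatrix := (LinearMap.toMatrixAlgEquiv (Module.Free.chooseBasis ℤ L)).toMulEquiv
  refine (isVirtuallyTorsionFree_generalLinearGroup_int _).of_injective
    (f := (Units.mapEquiv toMatrix).toMonoidHom.comp (DistribMulAction.toModuleEnd ℤ L).toHomUnits)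
    ((Units.mapEquiv toMatrix).injective.comp fun g h hgh ↦ ?_)
  exact FaithfulSMul.eq_of_smul_eq_smul fun v : L ↦ DFunLike.congr_fun (congrArg Units.val hgh) v

theorem isVirtuallyTorsionFree_linearEquiv (R L : Type*) [Semiring R] [AddCommGroup L]
    [Module R L] [Module.Finite ℤ L] [Module.Free ℤ L] : IsVirtuallyTorsionFree (L ≃ₗ[R] L) :=
  .of_faithfulSMul _ L

section Chebyshev

open Real Polynomial Polynomial.Chebyshev

/-- For `m = 0` the junk value `π / 0 = 0` makes the argument of `S` equal to `2`, which is the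
convention for the label `∞` of a Coxeter matrix. -/
theorem eval_S_two_mul_cos_pi_div_nonneg {m k : ℕ} (hm : m ≠ 1) (hk : m ≠ 0 → k ≤ m) :
    0 ≤ (S ℝ (k - 1)).eval (2 * cos (π / m)) := by
  obtain rfl | hm0 := eq_or_ne m 0
  · simp
  have hm2 : 2 ≤ m := by lia
  have hsin : 0 < sin (π / m) :=
    sin_pos_of_pos_of_lt_pi (by positivity) (div_lt_self pi_pos (by exact_mod_cast hm2))
  refine nonneg_of_mul_nonneg_left ?_ hsin
  rw [S_two_mul_real_cos]
  push_cast
  rw [sub_add_cancel, mul_div_left_comm]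
  refine sin_nonneg_of_nonneg_of_le_pi (by positivity) (mul_le_of_le_one_right pi_pos.le ?_)
  exact div_le_one_of_le₀ (by exact_mod_cast hk hm0) (by positivity)

theorem eval_S_sub_one_two_mul_cos_pi_div {m : ℕ} (hm : 2 ≤ m) :
    (S ℝ (m - 1)).eval (2 * cos (π / m)) = 0 := by
  have hsin : sin (π / m) ≠ 0 :=
    (sin_pos_of_pos_of_lt_pi (by positivity) (div_lt_self pi_pos (by exact_mod_cast hm))).ne'
  refine (mul_eq_zero_iff_right hsin).mp ?_
  rw [S_two_mul_real_cos]
  push_cast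
  rw [sub_add_cancel, mul_div_cancel₀ _ (by positivity), sin_pi]

theorem eval_S_add_eval_S_sub_one_two_mul_cos {k : ℕ} (hk : k ≠ 0) :
    (S ℝ k).eval (2 * cos (2 * π / (2 * k + 1))) +
      (S ℝ (k - 1)).eval (2 * cos (2 * π / (2 * k + 1))) = 0 := by
  have hk1 : (1 : ℝ) ≤ k := by exact_mod_cast Nat.one_le_iff_ne_zero.mpr hk
  set θ := 2 * π / (2 * k + 1) with hθ
  have hsin : sin θ ≠ 0 := by
    refine (sin_pos_of_pos_of_lt_pi (by positivity) ?_).ne'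
    rw [hθ, div_lt_iff₀ (by positivity)]
    nlinarith [pi_pos]
  refine (mul_eq_zero_iff_right hsin).mp ?_
  have hθk : ((k : ℤ) + 1 : ℝ) * θ = 2 * π - k * θ := by
    rw [hθ]; push_cast; field_simp; ring
  rw [add_mul, S_two_mul_real_cos, S_two_mul_real_cos, hθk, sin_two_pi_sub]
  push_cast
  rw [sub_add_cancel, neg_add_cancel]

end Chebyshev

section Reflections

open Module Real Polynomial Polynomial.Chebyshev

variable {R V : Type*} [CommRing R] [Algebra R ℝ] [FaithfulSMul R ℝ] [AddCommGroup V]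
  [Module R V] {x y : V} {f g : Dual R V} {m : ℕ}

theorem reflection_mul_reflection_pow_eq_one (hf : f x = 2) (hg : g y = 2) (hm : 2 ≤ m)
    (hfy : algebraMap R ℝ (f y) = -2 * cos (π / m))
    (hgx : algebraMap R ℝ (g x) = -2 * cos (π / m)) :
    (reflection hf * reflection hg) ^ m = 1 := by
  have hinj := FaithfulSMul.algebraMap_injective R ℝ
  have ht : algebraMap R ℝ (f y * g x - 2) = 2 * cos (2 * π / m) := by
    rw [map_sub, map_mul, hfy, hgx, map_ofNat, mul_div_assoc, cos_two_mul]
    ring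
  ext z
  rw [reflection_mul_reflection_pow_apply, LinearEquiv.coe_one, id]
  obtain ⟨k, rfl | rfl⟩ := m.even_or_odd'
  · obtain rfl | hk := eq_or_ne k 1
    · have hfy0 : f y = 0 := hinj (by simp [hfy])
      have hgx0 : g x = 0 := hinj (by simp [hgx])
      simp only [hfy0, hgx0, mul_zero, zero_mul, zero_sub, mul_one, Nat.cast_ofNat, sub_self,
        EuclideanDomain.zero_div, S_zero, S_one, S_neg_one, Int.reduceSub, Int.reduceDiv, eval_one,
        eval_zero, eval_X, add_zero, one_mul]
      module
    · have hS : (S R (k - 1)).eval (f y * g x - 2) = 0 := hinj <| by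
        rw [algebraMap_eval_S, ht, map_zero]
        convert eval_S_sub_one_two_mul_cos_pi_div (m := k) (by lia) using 4
        push_cast
        field_simp
      have h1 : ((2 * k : ℕ) - 2 : ℤ) / 2 = k - 1 := by lia
      have h2 : ((2 * k : ℕ) - 1 : ℤ) / 2 = k - 1 := by lia
      rw [h1, h2, hS]
      simp
  · have hS : (S R k).eval (f y * g x - 2) + (S R (k - 1)).eval (f y * g x - 2) = 0 := hinj <| by
      rw [map_add, algebraMap_eval_S, algebraMap_eval_S, ht, map_zero]
      exact_mod_cast eval_S_add_eval_S_sub_one_two_mul_cos (k := k) (by lia)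
    have h1 : ((2 * k + 1 : ℕ) - 1 : ℤ) / 2 = k := by lia
    have h2 : ((2 * k + 1 : ℕ) - 3 : ℤ) / 2 = k - 1 := by lia
    have h3 : ((2 * k + 1 : ℕ) : ℤ) / 2 = k := by lia
    have h4 : ((2 * k + 1 : ℕ) - 2 : ℤ) / 2 = k - 1 := by lia
    rw [h1, h2, h3, h4, hS]
    simp

end Reflections

section CoxeterGroups

open Module Real Polynomial.Chebyshev CoxeterSystem

variable {B W : Type*} [Group W] {M : CoxeterMatrix B} (cs : CoxeterSystem M W)

section Descents

variable {cs} {v w : W} {i j : B}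

theorem not_isRightDescent_of_length_mul_wordProd_cons {ω : List B}
    (h : cs.length (v * cs.wordProd (i :: ω)) = cs.length v + (i :: ω).length) :
    ¬ cs.IsRightDescent v i := by
  rw [cs.isRightDescent_iff]
  have hle := cs.length_mul_le (v * cs.simple i) (cs.wordProd ω)
  have hω := cs.length_wordProd_le ω
  rw [mul_assoc, ← cs.wordProd_cons] at hle
  rw [List.length_cons] at h
  lia

theorem lt_of_length_mul_alternatingWord {k : ℕ} (hM : M i j ≠ 0)
    (h : cs.length (v * cs.wordProd (alternatingWord i j k)) = cs.length v + k)
    (hi : ¬ cs.IsRightDescent (v * cs.wordProd (alternatingWord i j k)) i) : k < M i j := by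
  by_contra! hk
  have hlen := cs.length_mul_le v (cs.wordProd (alternatingWord j i (k + 1)))
  have hle := cs.length_wordProd_le (alternatingWord j i (k + 1))
  have hlt := cs.not_isReduced_alternatingWord j i (m := k + 1) (M.symmetric i j ▸ hM)
    (by rw [M.symmetric j i]; lia)
  rw [CoxeterSystem.IsReduced, length_alternatingWord] at hlt
  rw [length_alternatingWord] at hle
  rw [alternatingWord_succ, wordProd_concat] at hle hlt hlen
  rw [← mul_assoc] at hlen
  rw [not_isRightDescent_iff] at hi
  lia

/-- With `j` a right descent of `w`, split off from `w` the longest possible alternating suffix in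
the letters `i` and `j`. -/
theorem exists_eq_mul_alternatingWord (hw : w ≠ 1) (hi : ¬ cs.IsRightDescent w i) :
    ∃ (v : W) (j : B) (k : ℕ), i ≠ j ∧ k ≠ 0 ∧ w = v * cs.wordProd (alternatingWord i j k) ∧
      cs.length w = cs.length v + k ∧ ¬ cs.IsRightDescent v i ∧ ¬ cs.IsRightDescent v j := by
  classical
  obtain ⟨j, hj⟩ := cs.exists_rightDescent_of_ne_one hw
  let rest (k : ℕ) : W := w * (cs.wordProd (alternatingWord i j k))⁻¹
  let P (k : ℕ) : Prop := cs.length w = cs.length (rest k) + k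
  have hP1 : P 1 := by
    simpa [P, rest, alternatingWord] using (cs.isRightDescent_iff.mp hj).symm
  have hle {k : ℕ} (h : P k) : k ≤ cs.length w := by lia
  set k := Nat.findGreatest P (cs.length w)
  have hk : P k := Nat.findGreatest_spec (hle hP1) hP1
  have hk' : ¬ P (k + 1) := fun h ↦ Nat.findGreatest_is_greatest k.lt_succ_self (hle h) h
  have hk1 : 1 ≤ k := Nat.le_findGreatest (hle hP1) hP1
  have hwk : w = rest k * cs.wordProd (alternatingWord i j k) := by simp [rest]
  have hnext : ¬ cs.IsRightDescent (rest k) (if Even k then j else i) := by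
    intro h
    rw [isRightDescent_iff] at h
    apply hk'
    simp only [P, rest]
    rw [alternatingWord_succ', wordProd_cons, mul_inv_rev, inv_simple, ← mul_assoc]
    lia
  have hlast : ¬ cs.IsRightDescent (rest k) (if Even k then i else j) := by
    obtain ⟨l, hl⟩ := Nat.exists_eq_add_of_le' hk1
    have hword : alternatingWord i j k = (if Even k then i else j) :: alternatingWord i j l := by
      simp only [hl, alternatingWord_succ', Nat.even_add_one, ite_not]
    refine not_isRightDescent_of_length_mul_wordProd_cons (ω := alternatingWord i j l) ?_
    rw [← hword, ← hwk, length_alternatingWord, hk]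
  refine ⟨rest k, j, k, ?_, by lia, hwk, hk, ?_⟩
  · rintro rfl
    exact hi hj
  · split_ifs at hnext hlast
    exacts [⟨hlast, hnext⟩, ⟨hnext, hlast⟩]

end Descents

namespace GeometricRepresentation

variable (M)

/-- The ring generated by the numbers `2 cos (π / M i j)`, over which the geometric representation
of the Coxeter group of `M` is defined. -/
noncomputable def coefficientRing : Subalgebra ℤ ℝ :=
  Algebra.adjoin ℤ (Set.range fun p : B × B ↦ 2 * cos (π / M p.1 p.2))

instance [Finite B] : Module.Finite ℤ (coefficientRing M) := by
  refine Algebra.finite_adjoin_of_finite_of_isIntegral (Set.finite_range _) ?_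
  rintro _ ⟨⟨i, j⟩, rfl⟩
  have h := isIntegral_two_mul_cos_rat_mul_pi (1 / M i j)
  push_cast at h
  rwa [one_div_mul_eq_div] at h

/-- The number `2 cos (π / M i j)`, equal to `2` for the label `M i j = 0` standing for `∞`. -/
noncomputable def twoCos (i j : B) : coefficientRing M :=
  ⟨2 * cos (π / M i j), Algebra.subset_adjoin ⟨(i, j), rfl⟩⟩

theorem algebraMap_twoCos (i j : B) :
    algebraMap (coefficientRing M) ℝ (twoCos M i j) = 2 * cos (π / M i j) :=
  rfl

theorem twoCos_comm (i j : B) : twoCos M i j = twoCos M j i := by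
  ext
  simp only [twoCos, M.symmetric i j]

theorem twoCos_self (i : B) : twoCos M i i = -2 := by
  ext
  change 2 * cos (π / M i i) = -2
  simp

/-- The module carrying the geometric representation: it is free on the simple roots. -/
abbrev RootModule : Type _ :=
  B →₀ coefficientRing M

/-- The simple root `i`. -/
noncomputable def simpleRoot (i : B) : RootModule M :=
  Finsupp.single i 1

/-- The simple coroot `i`: the linear form taking the value `-2 cos (π / M i j)` on the simple
root `j`. -/
noncomputable def simpleCoroot (i : B) : Dual (coefficientRing M) (RootModule M) :=
  Finsupp.linearCombination _ fun j ↦ -twoCos M i j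

theorem simpleCoroot_simpleRoot (i j : B) :
    simpleCoroot M i (simpleRoot M j) = -twoCos M i j := by
  rw [simpleCoroot, simpleRoot, Finsupp.linearCombination_single, one_smul]

theorem simpleCoroot_simpleRoot_self (i : B) : simpleCoroot M i (simpleRoot M i) = 2 := by
  rw [simpleCoroot_simpleRoot, twoCos_self, neg_neg]

/-- The reflection in the simple root `i`. -/
noncomputable def simpleReflection (i : B) : RootModule M ≃ₗ[coefficientRing M] RootModule M :=
  reflection (simpleCoroot_simpleRoot_self M i)

theorem simpleReflection_simpleRoot (i j : B) :
    simpleReflection M i (simpleRoot M j) = simpleRoot M j + twoCos M i j • simpleRoot M i := by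
  rw [simpleReflection, reflection_apply, simpleCoroot_simpleRoot, neg_smul, sub_neg_eq_add]

theorem simpleReflection_simpleRoot_self (i : B) :
    simpleReflection M i (simpleRoot M i) = -simpleRoot M i :=
  reflection_apply_self _

theorem isLiftable_simpleReflection : M.IsLiftable (simpleReflection M) := by
  intro i j
  obtain rfl | hij := eq_or_ne i j
  · rw [M.diagonal, pow_one]
    ext1 v
    exact involutive_reflection (simpleCoroot_simpleRoot_self M i) v
  obtain hm | hm := eq_or_ne (M i j) 0
  · rw [hm, pow_zero]
  have hm2 : 2 ≤ M i j := by
    have := M.off_diagonal i j hij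
    lia
  refine reflection_mul_reflection_pow_eq_one _ _ hm2 ?_ ?_
  · rw [simpleCoroot_simpleRoot, map_neg, algebraMap_twoCos, neg_mul]
  · rw [simpleCoroot_simpleRoot, twoCos_comm, map_neg, algebraMap_twoCos, neg_mul]

variable {M}

/-- The geometric representation of a Coxeter group. -/
noncomputable def geomRep : W →* (RootModule M ≃ₗ[coefficientRing M] RootModule M) :=
  cs.lift ⟨simpleReflection M, isLiftable_simpleReflection M⟩

theorem geomRep_simple (i : B) : geomRep cs (cs.simple i) = simpleReflection M i :=
  cs.lift_apply_simple _ i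

theorem geomRep_alternatingWord_simpleRoot (i j : B) (n : ℕ) :
    geomRep cs (cs.wordProd (alternatingWord i j n)) (simpleRoot M i) =
      if Even n then
        (S _ n).eval (twoCos M i j) • simpleRoot M i +
          (S _ (n - 1)).eval (twoCos M i j) • simpleRoot M j
      else
        (S _ (n - 1)).eval (twoCos M i j) • simpleRoot M i +
          (S _ n).eval (twoCos M i j) • simpleRoot M j := by
  induction n with
  | zero => simp [alternatingWord]
  | succ n ih =>
    have hS : (S _ (n + 1)).eval (twoCos M i j) =
        twoCos M i j * (S _ n).eval (twoCos M i j) - (S _ (n - 1)).eval (twoCos M i j) := by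
      rw [S_add_one, Polynomial.eval_sub, Polynomial.eval_mul, Polynomial.eval_X]
    rw [alternatingWord_succ', wordProd_cons, map_mul, LinearEquiv.mul_apply, ih]
    push_cast
    rw [hS, add_sub_cancel_right, geomRep_simple]
    by_cases hn : Even n
    · simp only [hn, if_true, Nat.even_add_one, not_true, if_false, map_add, map_smul,
        simpleReflection_simpleRoot, twoCos_self, twoCos_comm M j i]
      module
    · simp only [hn, Nat.even_add_one, not_false_eq_true, if_true, if_false, map_add, map_smul,
        simpleReflection_simpleRoot, twoCos_self]
      module

theorem eval_S_twoCos_nonneg {i j : B} (hij : i ≠ j) {k : ℕ} (hk : M i j ≠ 0 → k ≤ M i j) :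
    0 ≤ (S (coefficientRing M) (k - 1)).eval (twoCos M i j) := by
  change 0 ≤ algebraMap (coefficientRing M) ℝ _
  rw [algebraMap_eval_S]
  exact eval_S_two_mul_cos_pi_div_nonneg (M.off_diagonal i j hij) hk

theorem exists_geomRep_alternatingWord_simpleRoot {i j : B} (hij : i ≠ j) {n : ℕ}
    (hn : M i j ≠ 0 → n < M i j) :
    ∃ p q : coefficientRing M, 0 ≤ p ∧ 0 ≤ q ∧
      geomRep cs (cs.wordProd (alternatingWord i j n)) (simpleRoot M i) =
        p • simpleRoot M i + q • simpleRoot M j := by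
  have h0 := eval_S_twoCos_nonneg hij fun h ↦ (hn h).le
  have h1 := eval_S_twoCos_nonneg hij (k := n + 1) hn
  push_cast at h1
  rw [add_sub_cancel_right] at h1
  rw [geomRep_alternatingWord_simpleRoot]
  split_ifs
  exacts [⟨_, _, h1, h0, rfl⟩, ⟨_, _, h0, h1, rfl⟩]

variable {cs} in
theorem geomRep_simpleRoot_nonneg {w : W} {i : B} (hi : ¬ cs.IsRightDescent w i) :
    0 ≤ geomRep cs w (simpleRoot M i) := by
  induction hn : cs.length w using Nat.strong_induction_on generalizing w i with
  | _ n ih =>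
  subst hn
  obtain rfl | hw := eq_or_ne w 1
  · simp [simpleRoot]
  obtain ⟨v, j, k, hij, hk, rfl, hlen, hvi, hvj⟩ := exists_eq_mul_alternatingWord hw hi
  obtain ⟨p, q, hp, hq, hpq⟩ := exists_geomRep_alternatingWord_simpleRoot cs hij fun hM ↦
    lt_of_length_mul_alternatingWord hM hlen hi
  have hlt : cs.length v < cs.length (v * cs.wordProd (alternatingWord i j k)) := by lia
  rw [map_mul, LinearEquiv.mul_apply, hpq, map_add, map_smul, map_smul]
  exact add_nonneg (smul_nonneg hp (ih _ hlt hvi rfl)) (smul_nonneg hq (ih _ hlt hvj rfl))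

theorem geomRep_injective : Function.Injective (geomRep cs) := by
  rw [injective_iff_map_eq_one]
  intro w hw
  by_contra hne
  obtain ⟨i, hi⟩ := cs.exists_rightDescent_of_ne_one hne
  have h := geomRep_simpleRoot_nonneg (cs.isRightDescent_iff_not_isRightDescent_mul.mp hi) i
  rw [map_mul, hw, one_mul, geomRep_simple, simpleReflection_simpleRoot_self] at h
  norm_num [simpleRoot] at h

end GeometricRepresentation

end CoxeterGroups

open GeometricRepresentation in
theorem isVirtuallyTorsionFree_of_coxeterSystem {B W : Type*} [Finite B] [Group W]
    {M : CoxeterMatrix B} (cs : CoxeterSystem M W) : IsVirtuallyTorsionFree W :=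
  (isVirtuallyTorsionFree_linearEquiv _ _).of_injective (geomRep_injective cs)

section TriangleGroups

variable {a b c : ℕ}

/-- The Coxeter matrix of the group generated by the reflections `r₀`, `r₁`, `r₂` in the sides of
a triangle with angles `π / a`, `π / b`, `π / c`, ordered so that `r₀ r₁`, `r₁ r₂` and `r₂ r₀` have
orders `a`, `b` and `c`. As usual for Coxeter matrices, the label `0` stands for `∞`. -/
def triangleCoxeterMatrix (ha : a ≠ 1) (hb : b ≠ 1) (hc : c ≠ 1) : CoxeterMatrix (Fin 3) where
  M := !![1, a, c; a, 1, b; c, b, 1]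
  isSymm := by ext i j; fin_cases i <;> fin_cases j <;> rfl
  diagonal i := by fin_cases i <;> rfl
  off_diagonal i j h := by fin_cases i <;> fin_cases j <;> simp_all

section Liftable

variable {G : Type*} [Group G]

theorem isLiftable_triangleCoxeterMatrix (ha : a ≠ 1) (hb : b ≠ 1) (hc : c ≠ 1) {r : Fin 3 → G}
    (hr : ∀ i, r i * r i = 1) (h01 : (r 0 * r 1) ^ a = 1) (h12 : (r 1 * r 2) ^ b = 1)
    (h20 : (r 2 * r 0) ^ c = 1) : (triangleCoxeterMatrix ha hb hc).IsLiftable r := by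
  have swap {i j : Fin 3} {n : ℕ} (h : (r i * r j) ^ n = 1) : (r j * r i) ^ n = 1 := by
    rw [← inv_eq_one, ← inv_pow, mul_inv_rev, inv_eq_of_mul_eq_one_left (hr i),
      inv_eq_of_mul_eq_one_left (hr j), h]
  have hdiag (i : Fin 3) : (r i * r i) ^ 1 = 1 := by rw [hr, one_pow]
  intro i j
  fin_cases i <;> fin_cases j
  exacts [hdiag 0, h01, swap h20, swap h01, hdiag 1, h12, h20, swap h12, hdiag 2]

theorem isLiftable_of_conj_eq_inv (ha : a ≠ 1) (hb : b ≠ 1) (hc : c ≠ 1) {x y s : G}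
    (hs : s * s = 1) (hsx : s * x * s = x⁻¹) (hsy : s * y * s = y⁻¹) (hx : x ^ a = 1)
    (hy : y ^ b = 1) (hxy : (x * y) ^ c = 1) :
    (triangleCoxeterMatrix ha hb hc).IsLiftable ![x * s, s, s * y] := by
  have h20 : s * y * (x * s) = (x * y)⁻¹ := by
    calc s * y * (x * s) = s * y * (s * s) * (x * s) := by rw [hs, mul_one]
      _ = (s * y * s) * (s * x * s) := by group
      _ = (x * y)⁻¹ := by rw [hsx, hsy, mul_inv_rev]
  refine isLiftable_triangleCoxeterMatrix ha hb hc (fun i ↦ ?_) ?_ ?_ ?_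
  · fin_cases i
    · change x * s * (x * s) = 1
      rw [mul_assoc, ← mul_assoc s, hsx, mul_inv_cancel]
    · exact hs
    · change s * y * (s * y) = 1
      rw [← mul_assoc, hsy, inv_mul_cancel]
  · change (x * s * s) ^ a = 1
    rw [mul_assoc, hs, mul_one, hx]
  · change (s * (s * y)) ^ b = 1
    rw [← mul_assoc, hs, one_mul, hy]
  · change (s * y * (x * s)) ^ c = 1
    rw [h20, inv_pow, hxy, inv_one]

end Liftable

namespace TriangleGroup

local notation "X" => (PresentedGroup.of 0 : TriangleGroup a b c)
local notation "Y" => (PresentedGroup.of 1 : TriangleGroup a b c)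
local notation "Z" => (PresentedGroup.of 2 : TriangleGroup a b c)

theorem x_pow : X ^ a = 1 :=
  PresentedGroup.one_of_mem (rels := TriangleRels a b c) (by simp [TriangleRels])

theorem y_pow : Y ^ b = 1 :=
  PresentedGroup.one_of_mem (rels := TriangleRels a b c) (by simp [TriangleRels])

theorem z_pow : Z ^ c = 1 :=
  PresentedGroup.one_of_mem (rels := TriangleRels a b c) (by simp [TriangleRels])

theorem x_mul_y_mul_z : X * Y * Z = 1 :=
  PresentedGroup.one_of_mem (rels := TriangleRels a b c) (by simp [TriangleRels])

theorem z_eq : Z = Y⁻¹ * X⁻¹ := by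
  rw [← mul_inv_rev, eq_inv_of_mul_eq_one_right x_mul_y_mul_z]

theorem x_mul_y_pow : (X * Y) ^ c = 1 := by
  rw [eq_inv_of_mul_eq_one_left x_mul_y_mul_z, inv_pow, z_pow, inv_one]

theorem inv_x_mul_inv_y_pow : (X⁻¹ * Y⁻¹) ^ c = 1 := by
  have h : X⁻¹ * Y⁻¹ = Y * Z * Y⁻¹ := by rw [z_eq]; group
  rw [h, conj_pow, z_pow, mul_one, mul_inv_cancel]

theorem hom_ext {G : Type*} [Group G] {f g : TriangleGroup a b c →* G} (hx : f X = g X)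
    (hy : f Y = g Y) : f = g := by
  refine PresentedGroup.ext fun i ↦ ?_
  fin_cases i
  exacts [hx, hy, by simp [z_eq, hx, hy]]

section Lift

variable {G : Type*} [Group G] {x y : G} (hx : x ^ a = 1) (hy : y ^ b = 1) (hxy : (x * y) ^ c = 1)

/-- The homomorphism out of a triangle group with prescribed images of the first two generators. -/
def lift : TriangleGroup a b c →* G :=
  PresentedGroup.toGroup (f := ![x, y, (x * y)⁻¹]) <| by
    rintro r (rfl | rfl | rfl | rfl)
    exacts [by simpa, by simpa, by simpa [-mul_inv_rev], by simp]

@[simp] theorem lift_x : lift hx hy hxy X = x := PresentedGroup.toGroup.of _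

@[simp] theorem lift_y : lift hx hy hxy Y = y := PresentedGroup.toGroup.of _

end Lift

/-- The endomorphism of the orientation-preserving group `T(a,b,c)` induced by the reflection in
the side of the triangle joining the rotation centres of `x` and `y`. -/
def mirrorHom : TriangleGroup a b c →* TriangleGroup a b c :=
  lift (x := X⁻¹) (y := Y⁻¹) (by rw [inv_pow, x_pow, inv_one]) (by rw [inv_pow, y_pow, inv_one])
    inv_x_mul_inv_y_pow

theorem mirrorHom_comp_mirrorHom :
    (mirrorHom.comp mirrorHom : TriangleGroup a b c →* _) = MonoidHom.id _ :=
  hom_ext (by simp [mirrorHom]) (by simp [mirrorHom])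

/-- The automorphism of `T(a,b,c)` inverting `x` and `y`: conjugation by the reflection in the
side of the triangle joining the rotation centres of `x` and `y`. -/
def mirror : MulAut (TriangleGroup a b c) :=
  MonoidHom.toMulEquiv mirrorHom mirrorHom mirrorHom_comp_mirrorHom mirrorHom_comp_mirrorHom

theorem mirror_mul_self : (mirror * mirror : MulAut (TriangleGroup a b c)) = 1 :=
  MulEquiv.ext fun g ↦ DFunLike.congr_fun mirrorHom_comp_mirrorHom g

theorem mirror_x : mirror X = X⁻¹ := by
  simp [mirror, mirrorHom]

theorem mirror_y : mirror Y = Y⁻¹ := by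
  simp [mirror, mirrorHom]

section Coxeter

variable {ha : a ≠ 1} {hb : b ≠ 1} {hc : c ≠ 1} {W : Type*} [Group W]
  (cs : CoxeterSystem (triangleCoxeterMatrix ha hb hc) W)

/-- The map from a triangle group to the Coxeter group of the triangle, which writes the rotations
`x` and `y` as products of two reflections. -/
def toCoxeterGroup : TriangleGroup a b c →* W :=
  lift (x := cs.simple 0 * cs.simple 1) (y := cs.simple 1 * cs.simple 2)
    (cs.simple_mul_simple_pow 0 1) (cs.simple_mul_simple_pow 1 2) <| by
      have h : (cs.simple 0 * cs.simple 2) ^ c = 1 := cs.simple_mul_simple_pow 0 2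
      simpa [mul_assoc] using h

theorem toCoxeterGroup_x : toCoxeterGroup cs X = cs.simple 0 * cs.simple 1 := lift_x ..

theorem toCoxeterGroup_y : toCoxeterGroup cs Y = cs.simple 1 * cs.simple 2 := lift_y ..

open SemidirectProduct in
theorem toCoxeterGroup_injective : Function.Injective (toCoxeterGroup cs) := by
  let Holomorph := TriangleGroup a b c ⋊[MonoidHom.id _] MulAut (TriangleGroup a b c)
  let ι : TriangleGroup a b c →* Holomorph := inl
  let s : Holomorph := inr mirror
  have hs : s * s = 1 := by rw [← map_mul, mirror_mul_self, map_one]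
  have hconj (g : TriangleGroup a b c) : s * ι g * s = ι (mirror g) := by
    have h := inl_aut (φ := MonoidHom.id (MulAut (TriangleGroup a b c))) mirror g
    rw [inv_eq_of_mul_eq_one_right mirror_mul_self] at h
    exact h.symm
  have hr : (triangleCoxeterMatrix ha hb hc).IsLiftable ![ι X * s, s, s * ι Y] :=
    isLiftable_of_conj_eq_inv ha hb hc hs (by rw [hconj, mirror_x, map_inv])
      (by rw [hconj, mirror_y, map_inv]) (by rw [← map_pow, x_pow, map_one])
      (by rw [← map_pow, y_pow, map_one]) (by rw [← map_mul, ← map_pow, x_mul_y_pow, map_one])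
  have hsimple (i : Fin 3) : cs.lift ⟨_, hr⟩ (cs.simple i) = ![ι X * s, s, s * ι Y] i :=
    cs.lift_apply_simple hr i
  have hcomp : (cs.lift ⟨_, hr⟩).comp (toCoxeterGroup cs) = ι := by
    refine hom_ext ?_ ?_
    · simp [toCoxeterGroup_x, hsimple, mul_assoc, hs]
    · simp [toCoxeterGroup_y, hsimple, ← mul_assoc, hs]
  refine Function.Injective.of_comp (f := cs.lift ⟨_, hr⟩) ?_
  rw [← MonoidHom.coe_comp, hcomp]
  exact inl_injective

end Coxeter

end TriangleGroup

end TriangleGroups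

/-- The exponent `0` imposes no relation; for instance, `T(2,3,0)` is the modular group. -/
theorem triangleGroup_exists_torsionFree_normal_finiteIndex_general
    (a b c : ℕ) (ha : a ≠ 1) (hb : b ≠ 1) (hc : c ≠ 1) :
    ∃ N : Subgroup (TriangleGroup a b c), N.Normal ∧ N.index ≠ 0 ∧
      ∀ x ∈ N, IsOfFinOrder x → x = 1 := by
  let cs := (triangleCoxeterMatrix ha hb hc).toCoxeterSystem
  exact (isVirtuallyTorsionFree_of_coxeterSystem cs).of_injective
    (TriangleGroup.toCoxeterGroup_injective cs)

/-- Every triangle group `T(a,b,c)` with `a, b, c ≥ 2` has a torsion-free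
normal subgroup of finite index. -/
theorem triangleGroup_exists_torsionFree_normal_finiteIndex
    (a b c : ℕ) (ha : 2 ≤ a) (hb : 2 ≤ b) (hc : 2 ≤ c) :
    ∃ N : Subgroup (TriangleGroup a b c), N.Normal ∧ N.index ≠ 0 ∧
      ∀ x ∈ N, IsOfFinOrder x → x = 1 :=
  triangleGroup_exists_torsionFree_normal_finiteIndex_general a b c (by lia) (by lia) (by lia)
end

section
/- (Fox's permutation lemma) For all integers a, b, c ≥ 2 there exist a natural number n and permutations σ and τ of Fin n such that σ has order a, τ has order b, and the product σ·τ has order c. -/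
/-!
Over a field `K`, an element of `SL(2, K)` with eigenvalues `x ≠ x⁻¹` has order `orderOf (x ^ 2)`
in `PSL(2, K)`: by Cayley–Hamilton, its `k`-th power is scalar exactly when `x ^ k = x⁻¹ ^ k`. An
upper and a lower triangular matrix with prescribed eigenvalues `x, x⁻¹` and `y, y⁻¹` leave the
trace of their product free, so all three orders can be prescribed at once. A prime `p` with
`p ≡ 1 mod 2abc` provides units of orders `2a`, `2b`, `2c`, and the finite group `PSL(2, ZMod p)`
acts faithfully on itself by translation.
-/

open Matrix MatrixGroups

section QuadraticElement

variable {A : Type*} [Ring A]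

theorem sub_smul_pow_eq_of_sq_eq {R : Type*} [CommRing R] [Algebra R A] {m : A} {x y : R}
    (hm : m ^ 2 = (x + y) • m - (x * y) • 1) (k : ℕ) :
    (x - y) • m ^ k = (x ^ k - y ^ k) • m + (x * y ^ k - y * x ^ k) • 1 := by
  induction k with
  | zero => simp
  | succ k ih =>
    rw [pow_succ, ← smul_mul_assoc, ih, add_mul, smul_mul_assoc, ← sq, hm, smul_mul_assoc, one_mul]
    module

theorem pow_mem_bot_iff_of_sq_eq {K : Type*} [Field K] [Algebra K A] {m : A} {x y : K}
    (hm : m ^ 2 = (x + y) • m - (x * y) • 1) (hxy : x ≠ y) (hbot : m ∉ (⊥ : Subalgebra K A))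
    (k : ℕ) : m ^ k ∈ (⊥ : Subalgebra K A) ↔ x ^ k = y ^ k := by
  let S := Subalgebra.toSubmodule (⊥ : Subalgebra K A)
  have hone (r : K) : r • (1 : A) ∈ S := S.smul_mem r (one_mem (⊥ : Subalgebra K A))
  calc m ^ k ∈ S
    _ ↔ (x - y) • m ^ k ∈ S := (S.smul_mem_iff (sub_ne_zero.2 hxy)).symm
    _ ↔ (x ^ k - y ^ k) • m ∈ S := by
      rw [sub_smul_pow_eq_of_sq_eq hm, S.add_mem_iff_left (hone _)]
    _ ↔ x ^ k = y ^ k := by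
      refine ⟨fun h => ?_, fun h => by simp [h]⟩
      by_contra hk
      exact hbot ((S.smul_mem_iff (sub_ne_zero.2 hk)).1 h)

end QuadraticElement

section SpecialLinearGroup

theorem sq_eq_trace_smul_sub_det_smul_one {R : Type*} [CommRing R] (M : Matrix (Fin 2) (Fin 2) R) :
    M ^ 2 = M.trace • M - M.det • 1 := by
  nontriviality R
  have h := M.aeval_self_charpoly
  simp only [charpoly_fin_two, map_add, map_sub, map_mul, map_pow, Polynomial.aeval_X,
    Polynomial.aeval_C, Algebra.algebraMap_eq_smul_one, smul_one_mul] at h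
  exact sub_eq_zero.1 (by rw [← h]; abel)

theorem notMem_bot_of_discr_ne_zero {R : Type*} [CommRing R] {M : Matrix (Fin 2) (Fin 2) R}
    (hM : M.discr ≠ 0) : M ∉ (⊥ : Subalgebra R (Matrix (Fin 2) (Fin 2) R)) := by
  intro hbot
  obtain ⟨r, rfl⟩ := Algebra.mem_bot.1 hbot
  apply hM
  rw [Algebra.algebraMap_eq_smul_one, discr_fin_two, trace_smul, trace_one, det_smul, det_one,
    Fintype.card_fin, smul_eq_mul]
  ring

theorem mem_center_iff_coe_mem_bot {n R : Type*} [Fintype n] [DecidableEq n] [CommRing R]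
    {M : Matrix.SpecialLinearGroup n R} :
    M ∈ Subgroup.center (Matrix.SpecialLinearGroup n R) ↔
      (M : Matrix n n R) ∈ (⊥ : Subalgebra R (Matrix n n R)) := by
  rw [Matrix.SpecialLinearGroup.mem_center_iff, Algebra.mem_bot]
  refine exists_congr fun r => and_iff_right_of_imp fun h => ?_
  rw [← M.det_coe, ← h, scalar_apply, det_diagonal, Finset.prod_const, Finset.card_univ]

variable {K : Type*} [Field K]

theorem orderOf_mk_center_eq_orderOf_sq {M : SL(2, K)} {x : Kˣ} (hx : x ^ 2 ≠ 1)
    (htr : M.1.trace = x + ↑x⁻¹) : orderOf (M : PSL(2, K)) = orderOf (x ^ 2) := by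
  have hpow (k : ℕ) : (x : K) ^ k = (↑x⁻¹ : K) ^ k ↔ (x ^ 2) ^ k = 1 := by
    rw [← Units.val_pow_eq_pow_val, ← Units.val_pow_eq_pow_val, Units.val_inj, inv_pow,
      eq_inv_iff_mul_eq_one, ← mul_pow, ← sq]
  have hne : (x : K) ≠ ↑x⁻¹ := fun h => hx (by simpa using (hpow 1).1 (by simpa using h))
  have hquad : M.1 ^ 2 = ((x : K) + ↑x⁻¹) • M.1 - ((x : K) * ↑x⁻¹) • 1 := by
    rw [sq_eq_trace_smul_sub_det_smul_one, htr, M.det_coe, x.mul_inv]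
  have hdiscr : M.1.discr = ((x : K) - ↑x⁻¹) ^ 2 := by
    rw [discr_fin_two, htr, M.det_coe]
    linear_combination 4 * x.mul_inv
  have hbot := notMem_bot_of_discr_ne_zero (hdiscr ▸ pow_ne_zero 2 (sub_ne_zero.2 hne))
  refine orderOf_eq_orderOf_iff.2 fun k => ?_
  calc (M : PSL(2, K)) ^ k = 1
    _ ↔ M.1 ^ k ∈ (⊥ : Subalgebra K (Matrix (Fin 2) (Fin 2) K)) := by
      rw [← QuotientGroup.mk_pow, QuotientGroup.eq_one_iff, mem_center_iff_coe_mem_bot,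
        Matrix.SpecialLinearGroup.coe_pow]
    _ ↔ (x : K) ^ k = (↑x⁻¹ : K) ^ k := pow_mem_bot_iff_of_sq_eq hquad hne hbot k
    _ ↔ (x ^ 2) ^ k = 1 := hpow k

theorem exists_sl_two_trace_eq {R : Type*} [CommRing R] (x y : Rˣ) (t : R) :
    ∃ A B : SL(2, R), A.1.trace = x + ↑x⁻¹ ∧ B.1.trace = y + ↑y⁻¹ ∧ (A * B).1.trace = t := by
  let A : SL(2, R) := ⟨!![↑x, 1; 0, ↑x⁻¹], by simp⟩
  let B : SL(2, R) := ⟨!![↑y, 0; t - x * y - ↑x⁻¹ * ↑y⁻¹, ↑y⁻¹], by simp⟩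
  refine ⟨A, B, trace_fin_two_of .., trace_fin_two_of .., ?_⟩
  rw [Matrix.SpecialLinearGroup.coe_mul, mul_fin_two, trace_fin_two_of]
  ring

theorem exists_psl_two_orderOf_eq {x y z : Kˣ} (hx : x ^ 2 ≠ 1) (hy : y ^ 2 ≠ 1) (hz : z ^ 2 ≠ 1) :
    ∃ g h : PSL(2, K), orderOf g = orderOf (x ^ 2) ∧ orderOf h = orderOf (y ^ 2) ∧
      orderOf (g * h) = orderOf (z ^ 2) := by
  obtain ⟨A, B, hA, hB, hAB⟩ := exists_sl_two_trace_eq x y ((z : K) + ↑z⁻¹)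
  exact ⟨A, B, orderOf_mk_center_eq_orderOf_sq hx hA, orderOf_mk_center_eq_orderOf_sq hy hB,
    orderOf_mk_center_eq_orderOf_sq hz hAB⟩

end SpecialLinearGroup

theorem exists_orderOf_eq_of_dvd_natCard {G : Type*} [Group G] [IsCyclic G] [Finite G] {d : ℕ}
    (hd : d ∣ Nat.card G) : ∃ g : G, orderOf g = d := by
  obtain ⟨g, hg⟩ := IsCyclic.exists_ofOrder_eq_natCard (α := G)
  exact ⟨g ^ (orderOf g / d), orderOf_pow_orderOf_div (orderOf_pos g).ne' (hg ▸ hd)⟩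

theorem exists_prime_forall_dvd_exists_orderOf_sq_eq {n : ℕ} (hn : n ≠ 0) :
    ∃ p : ℕ, p.Prime ∧ ∀ d, d ∣ n → ∃ x : (ZMod p)ˣ, orderOf (x ^ 2) = d := by
  obtain ⟨p, hp, -, hmod⟩ := Nat.exists_prime_gt_modEq_one 1 (mul_ne_zero two_ne_zero hn)
  have : Fact p.Prime := ⟨hp⟩
  have hcard : 2 * n ∣ Nat.card (ZMod p)ˣ := by
    rw [Nat.card_eq_fintype_card, ZMod.card_units]
    exact (Nat.modEq_iff_dvd' hp.one_le).1 hmod.symm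
  refine ⟨p, hp, fun d hd => ?_⟩
  obtain ⟨x, hx⟩ := exists_orderOf_eq_of_dvd_natCard ((Nat.mul_dvd_mul_left 2 hd).trans hcard)
  refine ⟨x, ?_⟩
  rw [orderOf_pow_of_dvd two_ne_zero (hx ▸ dvd_mul_right 2 d), hx,
    Nat.mul_div_cancel_left d two_pos]

theorem exists_injective_monoidHom_perm_fin (G : Type*) [Group G] [Finite G] :
    ∃ f : G →* Equiv.Perm (Fin (Nat.card G)), Function.Injective f :=
  let e := (Finite.equivFin G).permCongrHom
  ⟨e.toMonoidHom.comp (MulAction.toPermHom G G), e.injective.comp MulAction.toPerm_injective⟩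

/-- **Fox's permutation lemma**: for all `a, b, c ≥ 2` there are permutations
`σ`, `τ` of some finite set `Fin n` with `σ` of order `a`, `τ` of order `b`
and `σ·τ` of order `c`. -/
theorem fox_permutation_lemma (a b c : ℕ) (ha : 2 ≤ a) (hb : 2 ≤ b) (hc : 2 ≤ c) :
    ∃ (n : ℕ) (σ τ : Equiv.Perm (Fin n)),
      orderOf σ = a ∧ orderOf τ = b ∧ orderOf (σ * τ) = c := by
  obtain ⟨p, hp, hunits⟩ :=
    exists_prime_forall_dvd_exists_orderOf_sq_eq (n := a * b * c) (by positivity)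
  have : Fact p.Prime := ⟨hp⟩
  obtain ⟨x, rfl⟩ := hunits a ((dvd_mul_right a b).mul_right c)
  obtain ⟨y, rfl⟩ := hunits b ((dvd_mul_left b _).mul_right c)
  obtain ⟨z, rfl⟩ := hunits c (dvd_mul_left c _)
  have hne {u : (ZMod p)ˣ} (hu : 2 ≤ orderOf u) : u ≠ 1 := by
    rintro rfl
    simp at hu
  obtain ⟨g, h, hg, hh, hgh⟩ := exists_psl_two_orderOf_eq (hne ha) (hne hb) (hne hc)
  obtain ⟨f, hf⟩ := exists_injective_monoidHom_perm_fin PSL(2, ZMod p)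
  refine ⟨_, f g, f h, ?_, ?_, ?_⟩
  · rw [orderOf_injective f hf, hg]
  · rw [orderOf_injective f hf, hh]
  · rw [← map_mul, orderOf_injective f hf, hgh]
end

section
/- Let h : G → K be a group homomorphism and S a subset of G such that (i) every element of G of finite order is conjugate in G to an integer power of some element of S, and (ii) every s ∈ S has finite order and the order of h(s) in K equals the order of s in G. Then the kernel of h is torsion-free, i.e., every element of ker h of finite order is the identity. -/
section

variable {G K : Type*} [Group G] [Group K]

theorem zpow_eq_one_iff_of_orderOf_eq {a : G} {b : K} (hab : orderOf a = orderOf b) (k : ℤ) :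
    a ^ k = 1 ↔ b ^ k = 1 := by
  rw [← orderOf_dvd_iff_zpow_eq_one, hab, orderOf_dvd_iff_zpow_eq_one]

theorem eq_one_of_mem_ker_of_isConj_zpow (h : G →* K) {x s : G} {k : ℤ} (hx : x ∈ h.ker)
    (hs : orderOf (h s) = orderOf s) (hxs : IsConj x (s ^ k)) : x = 1 := by
  have map_zpow_eq_one : h s ^ k = 1 := by
    simpa only [h.mem_ker.mp hx, isConj_one_right, map_zpow] using h.map_isConj hxs
  have zpow_eq_one : s ^ k = 1 := (zpow_eq_one_iff_of_orderOf_eq hs k).mp map_zpow_eq_one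
  exact isConj_one_left.mp (zpow_eq_one ▸ hxs)

theorem ker_torsionFree_of_orders_preserved_general (h : G →* K) (S : Set G)
    (hconj : ∀ g : G, IsOfFinOrder g → ∃ s ∈ S, ∃ k : ℤ, IsConj g (s ^ k))
    (hord : ∀ s ∈ S, orderOf (h s) = orderOf s) :
    ∀ x ∈ h.ker, IsOfFinOrder x → x = 1 := by
  intro x hx hfin
  obtain ⟨s, hs, k, hxs⟩ := hconj x hfin
  exact eq_one_of_mem_ker_of_isConj_zpow h hx (hord s hs) hxs

end

/-- If `h : G →* K` and `S ⊆ G` are such that every torsion element of `G`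
is conjugate to an integer power of an element of `S`, and every `s ∈ S`
has finite order preserved by `h`, then the kernel of `h` is torsion-free. -/
theorem ker_torsionFree_of_orders_preserved {G K : Type*} [Group G] [Group K]
    (h : G →* K) (S : Set G)
    (hconj : ∀ g : G, IsOfFinOrder g → ∃ s ∈ S, ∃ k : ℤ, IsConj g (s ^ k))
    (hord : ∀ s ∈ S, IsOfFinOrder s ∧ orderOf (h s) = orderOf s) :
    ∀ x ∈ h.ker, IsOfFinOrder x → x = 1 :=
  ker_torsionFree_of_orders_preserved_general h S hconj fun s hs ↦ (hord s hs).2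
end

section
/- For all integers a, b, c ≥ 2, in the triangle group T(a,b,c) the generators have exact orders: orderOf x̄ = a, orderOf ȳ = b, and orderOf z̄ = c. -/
/-
Orders in `T(a,b,c)` divide `a`, `b`, `c` by the relators, so it suffices to find some group with
elements of these orders and product one; `PSL₂(ℂ)` is such a group. A matrix in `SL₂` with
distinct eigenvalues `w`, `w⁻¹` has the order of `w / w⁻¹ = w ^ 2` modulo the centre, and two
matrices in `SL₂` can be chosen with prescribed traces for them and for their product.
-/

section

open Polynomial Matrix
open scoped MatrixGroups

theorem aeval_eq_algebraMap_iff {K R : Type*} [Field K] [Ring R] [Algebra K R] {a : R}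
    {s : Finset K} (hs : ↑s ⊆ spectrum K a) (ha : aeval a (∏ x ∈ s, (X - C x)) = 0)
    (p : K[X]) (r : K) : aeval a p = algebraMap K R r ↔ ∀ x ∈ s, p.eval x = r := by
  constructor
  · intro hp x hx
    have hmem : p.eval x ∈ spectrum K (algebraMap K R r) :=
      hp ▸ spectrum.subset_polynomial_aeval a p ⟨x, hs hx, rfl⟩
    have : Nontrivial R := not_subsingleton_iff_nontrivial.1 fun _ => by
      simp [spectrum.of_subsingleton] at hmem
    simpa only [spectrum.scalar_eq, Set.mem_singleton_iff] using hmem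
  · intro hp
    have hdvd : ∏ x ∈ s, (X - C x) ∣ p - C r :=
      Finset.prod_dvd_of_coprime
        (fun x _ y _ hxy => isCoprime_X_sub_C_of_isUnit_sub (sub_ne_zero_of_ne hxy).isUnit)
        fun x hx => dvd_iff_isRoot.2 (by simp [hp x hx])
    have hzero : aeval a (p - C r) = 0 := aeval_eq_zero_of_dvd_aeval_eq_zero hdvd ha
    rwa [map_sub, aeval_C, sub_eq_zero] at hzero

theorem specialLinearGroup_mem_center_iff_exists_algebraMap {ι R : Type*} [Fintype ι]
    [DecidableEq ι] [CommRing R] {A : SpecialLinearGroup ι R} :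
    A ∈ Subgroup.center (SpecialLinearGroup ι R) ↔
      ∃ r, (A : Matrix ι ι R) = algebraMap R (Matrix ι ι R) r := by
  rw [Matrix.SpecialLinearGroup.mem_center_iff]
  constructor
  · rintro ⟨r, -, hr⟩
    exact ⟨r, hr.symm⟩
  · rintro ⟨r, hr⟩
    have hdet : (algebraMap R (Matrix ι ι R) r).det = 1 := hr ▸ A.det_coe
    exact ⟨r, by simpa [algebraMap_eq_diagonal] using hdet, hr.symm⟩

section SpecialLinearGroup

variable {R : Type*} [CommRing R]

theorem charpoly_eq_of_trace_eq_add_inv [Nontrivial R] {A : SL(2, R)} {w : Rˣ}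
    (hA : (A : Matrix (Fin 2) (Fin 2) R).trace = w + ↑w⁻¹) :
    (A : Matrix (Fin 2) (Fin 2) R).charpoly = (X - C (w : R)) * (X - C (↑w⁻¹ : R)) := by
  have hw : C (w : R) * C (↑w⁻¹ : R) = 1 := by rw [← C_mul, w.mul_inv, C_1]
  rw [charpoly_fin_two, hA, A.det_coe, C_add, C_1]
  linear_combination -hw

theorem exists_trace_eq_and_trace_mul_eq (u v : Rˣ) (t : R) :
    ∃ A B : SL(2, R), (A : Matrix (Fin 2) (Fin 2) R).trace = u + ↑u⁻¹ ∧
      (B : Matrix (Fin 2) (Fin 2) R).trace = v + ↑v⁻¹ ∧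
      ((A * B : SL(2, R)) : Matrix (Fin 2) (Fin 2) R).trace = t := by
  let A : SL(2, R) := ⟨!![↑u, 1; 0, ↑u⁻¹], by simp⟩
  let B : SL(2, R) := ⟨!![↑v, 0; t - u * v - ↑u⁻¹ * ↑v⁻¹, ↑v⁻¹], by simp⟩
  refine ⟨A, B, by simp [A, trace_fin_two], by simp [B, trace_fin_two], ?_⟩
  rw [Matrix.SpecialLinearGroup.coe_mul]
  simp only [A, B, mul_fin_two, trace_fin_two_of]
  ring

variable {K : Type*} [Field K]

theorem pow_mem_center_iff_of_trace_eq_add_inv {A : SL(2, K)} {w : Kˣ} (hw : w ^ 2 ≠ 1)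
    (hA : (A : Matrix (Fin 2) (Fin 2) K).trace = w + ↑w⁻¹) (n : ℕ) :
    A ^ n ∈ Subgroup.center SL(2, K) ↔ (w ^ 2) ^ n = 1 := by
  classical
  have hne : (w : K) ≠ ↑w⁻¹ := by
    rwa [ne_eq, Units.val_inj, eq_inv_iff_mul_eq_one, ← sq]
  have hcharpoly := charpoly_eq_of_trace_eq_add_inv hA
  have hspectrum : ↑({↑w, ↑w⁻¹} : Finset K) ⊆ spectrum K (A : Matrix (Fin 2) (Fin 2) K) := by
    intro x hx
    rw [mem_spectrum_iff_isRoot_charpoly, hcharpoly]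
    simpa [sub_eq_zero] using hx
  have hzero : aeval (A : Matrix (Fin 2) (Fin 2) K)
      (∏ x ∈ ({↑w, ↑w⁻¹} : Finset K), (X - C x)) = 0 := by
    rw [Finset.prod_pair hne, ← hcharpoly, aeval_self_charpoly]
  have hscalar (r : K) : (A : Matrix (Fin 2) (Fin 2) K) ^ n = algebraMap K _ r ↔
      (w : K) ^ n = r ∧ (↑w⁻¹ : K) ^ n = r := by
    simpa using aeval_eq_algebraMap_iff hspectrum hzero (X ^ n) r
  calc A ^ n ∈ Subgroup.center SL(2, K)
      ↔ ∃ r, (w : K) ^ n = r ∧ (↑w⁻¹ : K) ^ n = r := by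
        simp only [specialLinearGroup_mem_center_iff_exists_algebraMap,
          Matrix.SpecialLinearGroup.coe_pow, hscalar]
    _ ↔ w⁻¹ ^ n = w ^ n := by
        rw [exists_eq_left', ← Units.val_pow_eq_pow_val, ← Units.val_pow_eq_pow_val,
          Units.val_inj]
    _ ↔ (w ^ 2) ^ n = 1 := by
        rw [inv_pow, inv_eq_iff_mul_eq_one, ← mul_pow, ← sq]

theorem orderOf_mk_of_trace_eq_add_inv {A : SL(2, K)} {w : Kˣ} (hw : w ^ 2 ≠ 1)
    (hA : (A : Matrix (Fin 2) (Fin 2) K).trace = w + ↑w⁻¹) :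
    orderOf (QuotientGroup.mk A : PSL(2, K)) = orderOf (w ^ 2) := by
  rw [orderOf_eq_orderOf_iff]
  intro n
  rw [← QuotientGroup.mk_pow, QuotientGroup.eq_one_iff,
    pow_mem_center_iff_of_trace_eq_add_inv hw hA]

theorem exists_projectiveSpecialLinearGroup_orderOf_eq {u v w : Kˣ}
    (hu : u ^ 2 ≠ 1) (hv : v ^ 2 ≠ 1) (hw : w ^ 2 ≠ 1) :
    ∃ x y z : PSL(2, K), x * y * z = 1 ∧
      orderOf x = orderOf (u ^ 2) ∧ orderOf y = orderOf (v ^ 2) ∧ orderOf z = orderOf (w ^ 2) := by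
  obtain ⟨A, B, hA, hB, hAB⟩ := exists_trace_eq_and_trace_mul_eq u v ((w : K) + ↑w⁻¹)
  refine ⟨QuotientGroup.mk A, QuotientGroup.mk B, (QuotientGroup.mk (A * B))⁻¹, ?_,
    orderOf_mk_of_trace_eq_add_inv hu hA, orderOf_mk_of_trace_eq_add_inv hv hB, ?_⟩
  · rw [QuotientGroup.mk_mul, mul_inv_cancel]
  · rw [orderOf_inv, orderOf_mk_of_trace_eq_add_inv hw hAB]

end SpecialLinearGroup

end

theorem exists_complex_unit_orderOf_sq_eq (n : ℕ) : ∃ w : ℂˣ, orderOf (w ^ 2) = n := by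
  obtain rfl | hn := eq_or_ne n 0
  · refine ⟨Units.mk0 2 two_ne_zero, orderOf_eq_zero fun hfin => ?_⟩
    have hnorm := (Units.isOfFinOrder_val.2 hfin).norm_eq_one
    norm_num at hnorm
  · have hroot := Complex.isPrimitiveRoot_exp (2 * n) (by lia)
    refine ⟨(hroot.isUnit (by lia)).unit, ?_⟩
    rw [← orderOf_units]
    exact (hroot.pow (by lia) rfl).eq_orderOf.symm

theorem presentedGroup_orderOf_of_eq {α G : Type*} [Group G] {rels : Set (FreeGroup α)} {f : α → G}
    (hf : ∀ r ∈ rels, FreeGroup.lift f r = 1) {i : α} {n : ℕ}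
    (hrel : FreeGroup.of i ^ n ∈ rels) (hn : orderOf (f i) = n) :
    orderOf (PresentedGroup.of i : PresentedGroup rels) = n := by
  apply Nat.dvd_antisymm
  · exact orderOf_dvd_of_pow_eq_one (PresentedGroup.one_of_mem hrel)
  · have hdvd := orderOf_map_dvd (PresentedGroup.toGroup hf) (PresentedGroup.of i)
    rwa [PresentedGroup.toGroup.of, hn] at hdvd

theorem lift_eq_one_of_mem_triangleRels {G : Type*} [Group G] {a b c : ℕ} {x y z : G}
    (hx : x ^ a = 1) (hy : y ^ b = 1) (hz : z ^ c = 1) (hxyz : x * y * z = 1) :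
    ∀ r ∈ TriangleRels a b c, FreeGroup.lift ![x, y, z] r = 1 := by
  rintro r (rfl | rfl | rfl | rfl)
  · simpa using hx
  · simpa using hy
  · simpa using hz
  · simpa using hxyz

theorem triangleGroup_orderOf_generators_of_mul_eq_one {G : Type*} [Group G] {x y z : G}
    (hxyz : x * y * z = 1) :
    orderOf (PresentedGroup.of 0 : TriangleGroup (orderOf x) (orderOf y) (orderOf z)) = orderOf x ∧
    orderOf (PresentedGroup.of 1 : TriangleGroup (orderOf x) (orderOf y) (orderOf z)) = orderOf y ∧
    orderOf (PresentedGroup.of 2 : TriangleGroup (orderOf x) (orderOf y) (orderOf z)) =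
      orderOf z := by
  have hlift := lift_eq_one_of_mem_triangleRels (pow_orderOf_eq_one x) (pow_orderOf_eq_one y)
    (pow_orderOf_eq_one z) hxyz
  exact ⟨presentedGroup_orderOf_of_eq hlift (by simp [TriangleRels]) rfl,
    presentedGroup_orderOf_of_eq hlift (by simp [TriangleRels]) rfl,
    presentedGroup_orderOf_of_eq hlift (by simp [TriangleRels]) rfl⟩

/-- An exponent `0` stands for `∞`: its relator is trivial, and `orderOf` is `0` on elements of
infinite order. For example, `T(2,3,0)` is the modular group. -/
theorem triangleGroup_orderOf_generators_general {a b c : ℕ}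
    (ha : a ≠ 1) (hb : b ≠ 1) (hc : c ≠ 1) :
    orderOf (PresentedGroup.of 0 : TriangleGroup a b c) = a ∧
    orderOf (PresentedGroup.of 1 : TriangleGroup a b c) = b ∧
    orderOf (PresentedGroup.of 2 : TriangleGroup a b c) = c := by
  obtain ⟨u, rfl⟩ := exists_complex_unit_orderOf_sq_eq a
  obtain ⟨v, rfl⟩ := exists_complex_unit_orderOf_sq_eq b
  obtain ⟨w, rfl⟩ := exists_complex_unit_orderOf_sq_eq c
  rw [ne_eq, orderOf_eq_one_iff] at ha hb hc
  obtain ⟨x, y, z, hxyz, hx, hy, hz⟩ := exists_projectiveSpecialLinearGroup_orderOf_eq ha hb hc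
  rw [← hx, ← hy, ← hz]
  exact triangleGroup_orderOf_generators_of_mul_eq_one hxyz

/-- In the triangle group `T(a,b,c)` with `a, b, c ≥ 2`, the generators have
exact orders `a`, `b` and `c`. -/
theorem triangleGroup_orderOf_generators (a b c : ℕ)
    (ha : 2 ≤ a) (hb : 2 ≤ b) (hc : 2 ≤ c) :
    orderOf (PresentedGroup.of 0 : TriangleGroup a b c) = a ∧
    orderOf (PresentedGroup.of 1 : TriangleGroup a b c) = b ∧
    orderOf (PresentedGroup.of 2 : TriangleGroup a b c) = c := by
  exact triangleGroup_orderOf_generators_general (by lia) (by lia) (by lia)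
end

section
/- (Classification of polyhedral groups) Every finite subgroup G of PSL(2, ℂ) is isomorphic to one of the following groups: a cyclic group ℤ/nℤ for some n ≥ 1, a dihedral group of order 2n for some n ≥ 2, the alternating group A_4, the symmetric group S_4, or the alternating group A_5. -/
/-!
Over an algebraically closed field `K`, a non-scalar matrix some power of which, of exponent prime
to the characteristic, is scalar, is diagonalizable with two distinct eigenvalues, so a nontrivial
element of a finite subgroup `G` of `PSL(2, K)` of order `N` prime to the characteristic has exactly
two fixed points on the projective line. Moreover stabilizers of points are cyclic. Burnside's lemma
applied to the points with nontrivial stabilizer (the poles) then leaves two possibilities.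

* Some stabilizer has index at most two. If it is all of `G`, then `G` is cyclic; otherwise the
  elements outside it are involutions and `G` is dihedral.
* `N` is `12`, `24` or `60`, and all stabilizers have order at most five. Since every element of `G`
  fixes a pole, all element orders are at most five, in particular prime powers. This forces `G` to
  act faithfully by conjugation on its four Sylow `3`-subgroups (`N = 12, 24`) or its five Sylow
  `2`-subgroups (`N = 60`), which identifies `G` with `A₄`, `S₄` or `A₅`.
-/

open MulAction
open scoped LinearAlgebra.Projectivization MatrixGroups

/-- A polyhedral group, i.e. a group isomorphic to a finite group of rotations of the sphere:
cyclic, dihedral, tetrahedral, octahedral or icosahedral. The Klein four-group counts as dihedral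
(`n = 2`). -/
def IsPolyhedralGroup (G : Type*) [Group G] : Prop :=
  (∃ n : ℕ, 1 ≤ n ∧ Nonempty (G ≃* Multiplicative (ZMod n))) ∨
  (∃ n : ℕ, 2 ≤ n ∧ Nonempty (G ≃* DihedralGroup n)) ∨
  Nonempty (G ≃* alternatingGroup (Fin 4)) ∨
  Nonempty (G ≃* Equiv.Perm (Fin 4)) ∨
  Nonempty (G ≃* alternatingGroup (Fin 5))

namespace IsPolyhedralGroup

variable {G H : Type*} [Group G] [Group H]

lemma of_mulEquiv (e : G ≃* H) (hH : IsPolyhedralGroup H) : IsPolyhedralGroup G :=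
  hH.imp (.imp fun _ ↦ .imp_right (.map e.trans)) <|
    .imp (.imp fun _ ↦ .imp_right (.map e.trans)) <|
      .imp (.map e.trans) (.imp (.map e.trans) (.map e.trans))

lemma of_isCyclic [Finite G] (hG : IsCyclic G) : IsPolyhedralGroup G :=
  .inl ⟨Nat.card G, Nat.card_pos, ⟨(zmodCyclicMulEquiv hG).symm⟩⟩

end IsPolyhedralGroup

/-! ### Recognition of the polyhedral groups -/

section Recognition

variable {G : Type*} [Group G]

lemma exists_injective_perm_fin {X : Type*} [Finite X] {n : ℕ}
    {f : G →* Equiv.Perm X} (hf : Function.Injective f) (hX : Nat.card X = n) :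
    ∃ f : G →* Equiv.Perm (Fin n), Function.Injective f :=
  let e := (Finite.equivFinOfCardEq hX).permCongrHom
  ⟨e.toMonoidHom.comp f, e.injective.comp hf⟩

lemma nonempty_mulEquiv_alternatingGroup {n : ℕ} {f : G →* Equiv.Perm (Fin n)}
    (hf : Function.Injective f) (hG : 2 * Nat.card G = n.factorial) :
    Nonempty (G ≃* alternatingGroup (Fin n)) := by
  have e := MonoidHom.ofInjective hf
  have hcard : Nat.card f.range = Nat.card G := (Nat.card_congr e.toEquiv).symm
  have hindex : f.range.index = 2 := by
    have hmul := f.range.card_mul_index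
    rw [hcard, Nat.card_perm, Nat.card_fin, ← hG, mul_comm] at hmul
    have := n.factorial_pos
    exact Nat.eq_of_mul_eq_mul_right (by omega) hmul
  rw [Equiv.Perm.eq_alternatingGroup_of_index_eq_two hindex] at e
  exact ⟨e⟩

lemma nonempty_mulEquiv_perm {n : ℕ} {f : G →* Equiv.Perm (Fin n)} (hf : Function.Injective f)
    (hG : Nat.card G = n.factorial) : Nonempty (G ≃* Equiv.Perm (Fin n)) :=
  ⟨.ofBijective f ((Nat.bijective_iff_injective_and_card f).2
    ⟨hf, by rw [hG, Nat.card_perm, Nat.card_fin]⟩)⟩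

lemma mul_eq_mul_inv_of_mul_self_eq_one {C : Subgroup G} (hC : ∀ g ∉ C, g * g = 1) {s c : G}
    (hs : s ∉ C) (hc : c ∈ C) : c * s = s * c⁻¹ := by
  have hsc : (s * c) * (s * c) = 1 := hC _ fun h ↦ hs ((C.mul_mem_cancel_right hc).1 h)
  rw [eq_mul_inv_iff_mul_eq]
  exact mul_left_cancel (a := s) (by rw [hC s hs, ← hsc]; simp only [mul_assoc])

/-- The homomorphism from `DihedralGroup n` determined by the image `c` of its rotations and the
image `s` of the reflection `sr 0`. -/
def dihedralHom {n : ℕ} (c : Multiplicative (ZMod n) →* G) (s : G) (hs : s * s = 1)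
    (hcs : ∀ i, c i * s = s * (c i)⁻¹) : DihedralGroup n →* G where
  toFun
    | .r i => c (.ofAdd i)
    | .sr i => s * c (.ofAdd i)
  map_one' := map_one c
  map_mul' := by
    rintro (i | i) (j | j)
    · simp [ofAdd_add]
    · simp only [DihedralGroup.r_mul_sr, sub_eq_neg_add, ofAdd_add, ofAdd_neg, map_mul, map_inv,
        ← mul_assoc, hcs]
    · simp only [DihedralGroup.sr_mul_r, ofAdd_add, map_mul, mul_assoc]
    · simp only [DihedralGroup.sr_mul_sr, sub_eq_neg_add, ofAdd_add, ofAdd_neg, map_mul, map_inv]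
      rw [mul_assoc, ← mul_assoc (c _) s, hcs, mul_assoc, ← mul_assoc, hs, one_mul]

lemma nonempty_mulEquiv_dihedralGroup (C : Subgroup G) [IsCyclic C] (hindex : C.index = 2)
    (hC : ∀ g ∉ C, g * g = 1) : Nonempty (G ≃* DihedralGroup (Nat.card C)) := by
  obtain ⟨s, hs, -⟩ := Subgroup.index_eq_two_iff_exists_notMem_and.1 hindex
  let e : Multiplicative (ZMod (Nat.card C)) ≃* C := zmodCyclicMulEquiv inferInstance
  let f := dihedralHom (C.subtype.comp e.toMonoidHom) s (hC s hs) fun i ↦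
    mul_eq_mul_inv_of_mul_self_eq_one hC hs (e i).2
  have hr (i) : f (.r i) = e (.ofAdd i) := rfl
  have hsr (i) : f (.sr i) = s * e (.ofAdd i) := rfl
  refine ⟨(MulEquiv.ofBijective f ⟨(injective_iff_map_eq_one f).2 ?_, fun g ↦ ?_⟩).symm⟩
  · rintro (i | i) hi
    · exact congrArg DihedralGroup.r (e.map_eq_one_iff.1 (OneMemClass.coe_eq_one.1 hi))
    · exact absurd ((C.mul_mem_cancel_right (e (.ofAdd i)).2).1 (hsr i ▸ hi ▸ C.one_mem)) hs
  · by_cases hg : g ∈ C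
    · exact ⟨.r (e.symm ⟨g, hg⟩).toAdd, by simp [hr]⟩
    · have hsg : s * g ∈ C := (Subgroup.mul_mem_iff_of_index_two hindex).2 (by tauto)
      exact ⟨.sr (e.symm ⟨s * g, hsg⟩).toAdd, by simp [hsr, ← mul_assoc, hC s hs]⟩

end Recognition

lemma relIndex_centralizer_normalizer_dvd_card_mulAut {G : Type*} [Group G] (H : Subgroup G) :
    (Subgroup.centralizer (H : Set G)).relIndex (Subgroup.normalizer (H : Set G)) ∣
      Nat.card (MulAut H) := by
  rw [Subgroup.relIndex, ← Subgroup.normalizerMonoidHom_ker, Subgroup.index_ker]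
  exact Subgroup.card_subgroup_dvd_card _

lemma card_sylow_of_card_eq {G : Type*} [Group G] [Finite G] {p : ℕ} [hp : Fact p.Prime]
    (P : Sylow p G) {n m : ℕ} (hG : Nat.card G = p ^ n * m) (hm : ¬ p ∣ m) :
    Nat.card P = p ^ n := by
  have hm0 : m ≠ 0 := fun h ↦ hm (h ▸ dvd_zero p)
  rw [P.card_eq_multiplicity, hG, Nat.factorization_mul (pow_ne_zero n hp.out.ne_zero) hm0,
    Finsupp.add_apply, Nat.factorization_eq_zero_of_not_dvd hm, hp.out.factorization_pow,
    Finsupp.single_eq_same, add_zero]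

lemma exists_isComplement'_of_card_sylow_eq_index {G : Type*} [Group G] [Finite G] {p : ℕ}
    [Fact p.Prime] (P : Sylow p G) [IsMulCommutative P]
    (hP : Nat.card (Sylow p G) = (P : Subgroup G).index) : ∃ K : Subgroup G, K.IsComplement' P := by
  rw [P.card_eq_index_normalizer] at hP
  have hmul := Subgroup.relIndex_mul_index (H := (P : Subgroup G)) Subgroup.le_normalizer
  have hnorm : Subgroup.normalizer (P : Set G) ≤ P :=
    Subgroup.relIndex_eq_one.1 ((mul_eq_right₀ Subgroup.index_ne_zero_of_finite).1
      (hmul.trans hP.symm))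
  exact ⟨_, MonoidHom.ker_transferSylow_isComplement' P (hnorm.trans (Subgroup.le_centralizer _))⟩

lemma card_mulAut_dvd_factorial (G : Type*) [Group G] [Finite G] :
    Nat.card (MulAut G) ∣ (Nat.card G).factorial :=
  Nat.card_perm (α := G) ▸ Subgroup.card_dvd_of_injective (MulAut.toPerm G) fun _ _ h ↦
    MulEquiv.ext fun x ↦ DFunLike.congr_fun h x

/-! ### Groups whose elements have prime power order -/

/-- A group in which every nontrivial element has prime power order, known in the literature as an
EPPO-group or CP-group. -/
def IsEPPOGroup (G : Type*) [Group G] : Prop :=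
  ∀ g : G, g ≠ 1 → IsPrimePow (orderOf g)

namespace IsEPPOGroup

variable {G : Type*} [Group G] {p : ℕ}

lemma of_orderOf_le_five [Finite G] (h : ∀ g : G, orderOf g ≤ 5) : IsEPPOGroup G := by
  intro g hg
  have hle := h g
  have hpos := orderOf_pos g
  have hne := mt orderOf_eq_one_iff.1 hg
  interval_cases orderOf g
  · exact absurd rfl hne
  · exact Nat.prime_two.isPrimePow
  · exact Nat.prime_three.isPrimePow
  · exact Nat.prime_two.isPrimePow.pow two_ne_zero
  · exact Nat.prime_five.isPrimePow

lemma subgroup (hG : IsEPPOGroup G) (H : Subgroup G) : IsEPPOGroup H := fun h hh ↦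
  H.orderOf_coe h ▸ hG h (mt OneMemClass.coe_eq_one.1 hh)

variable [hp : Fact p.Prime]

lemma eq_of_commute (hG : IsEPPOGroup G) {x y : G} {q : ℕ} (hxy : Commute x y) (hx : orderOf x = p)
    (hq : q.Prime) (hy : orderOf y = q) : p = q := by
  by_contra hne
  have hord : orderOf (x * y) = p * q := by
    rw [hxy.orderOf_mul_eq_mul_orderOf_of_coprime] <;> rw [hx, hy]
    exact (Nat.coprime_primes hp.out hq).2 hne
  have h1 : x * y ≠ 1 := fun h ↦ by
    rw [h, orderOf_one] at hord
    exact hp.out.ne_one (Nat.eq_one_of_mul_eq_one_right hord.symm)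
  exact hne <| (isPrimePow_iff_unique_prime_dvd.1 (hG _ h1)).unique
    ⟨hp.out, hord ▸ dvd_mul_right p q⟩ ⟨hq, hord ▸ dvd_mul_left q p⟩

variable [Finite G]

lemma isPGroup_centralizer (hG : IsEPPOGroup G) {x : G} (hx : p ∣ orderOf x) :
    IsPGroup p (Subgroup.centralizer {x}) := by
  rw [IsPGroup.iff_card]
  refine ⟨_, Nat.eq_prime_pow_of_unique_prime_dvd Nat.card_pos.ne' fun {q} hq hdvd ↦ ?_⟩
  have := Fact.mk hq
  obtain ⟨y, hy⟩ := exists_prime_orderOf_dvd_card' q hdvd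
  have hxy : Commute x y := (Subgroup.mem_centralizer_singleton_iff.1 y.2).symm
  exact (hG.eq_of_commute (hxy.pow_left _) (orderOf_pow_orderOf_div (orderOf_pos x).ne' hx) hq
    ((Subgroup.orderOf_coe y).trans hy)).symm

lemma centralizer_sylow (hG : IsEPPOGroup G) (P : Sylow p G) [IsMulCommutative P]
    (hP : (P : Subgroup G) ≠ ⊥) : Subgroup.centralizer (P : Set G) = P := by
  have hdvd : p ∣ Nat.card P := P.2.card_eq_or_dvd.resolve_left (mt Subgroup.card_eq_one.1 hP)
  obtain ⟨x, hx⟩ := exists_prime_orderOf_dvd_card' p hdvd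
  have hle : Subgroup.centralizer (P : Set G) ≤ Subgroup.centralizer {(x : G)} :=
    Subgroup.centralizer_le (Set.singleton_subset_iff.2 x.2)
  exact P.3 ((hG.isPGroup_centralizer ((Subgroup.orderOf_coe x).trans hx).symm.dvd).to_le hle)
    (Subgroup.le_centralizer _)

lemma exists_dvd_card_mulAut_mul_eq_index (hG : IsEPPOGroup G) (P : Sylow p G) [IsMulCommutative P]
    (hP : (P : Subgroup G) ≠ ⊥) :
    ∃ d, d ∣ Nat.card (MulAut P) ∧ d * Nat.card (Sylow p G) = (P : Subgroup G).index := by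
  have hdvd : (Subgroup.centralizer (P : Set G)).relIndex (Subgroup.normalizer (P : Set G)) ∣ _ :=
    relIndex_centralizer_normalizer_dvd_card_mulAut (P : Subgroup G)
  rw [hG.centralizer_sylow P hP] at hdvd
  refine ⟨_, hdvd, ?_⟩
  rw [P.card_eq_index_normalizer]
  exact Subgroup.relIndex_mul_index (H := (P : Subgroup G)) Subgroup.le_normalizer

/-- The kernel of the action normalizes every Sylow subgroup `P`, and it meets `P` trivially because
a nontrivial element of the intersection would be centralized by all Sylow subgroups. Hence it
centralizes `P`, so it is contained in `P`. -/
lemma toPermHom_sylow_injective (hG : IsEPPOGroup G) [Nontrivial (Sylow p G)]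
    (hcomm : ∀ P : Sylow p G, IsMulCommutative P) :
    Function.Injective (toPermHom G (Sylow p G)) := by
  obtain ⟨P, Q, hPQ⟩ := exists_pair_ne (Sylow p G)
  set K := (toPermHom G (Sylow p G)).ker with hK
  have hnorm (R : Sylow p G) : K ≤ Subgroup.normalizer (R : Set G) := fun k hk ↦
    Sylow.smul_eq_iff_mem_normalizer.1 (DFunLike.congr_fun (MonoidHom.mem_ker.1 hk) R)
  have hdisj : K ⊓ P = ⊥ := by
    refine (Subgroup.eq_bot_iff_forall _).2 fun k ⟨hkK, hkP⟩ ↦ by_contra fun hk ↦ hPQ ?_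
    have hkp : IsPGroup p (Subgroup.zpowers k) := P.2.to_le (Subgroup.zpowers_le.2 hkP)
    have hdvd : p ∣ orderOf k := Nat.card_zpowers k ▸ hkp.card_eq_or_dvd.resolve_left
      (by rwa [Nat.card_zpowers, orderOf_eq_one_iff])
    have hmem (R : Sylow p G) : k ∈ R :=
      (hkp.inf_normalizer_sylow R ▸ ⟨Subgroup.mem_zpowers k, hnorm R hkK⟩ :
        k ∈ Subgroup.zpowers k ⊓ R).2
    have heq (R : Sylow p G) : Subgroup.centralizer {k} = R :=
      have := hcomm R
      R.3 (hG.isPGroup_centralizer hdvd) <| (Subgroup.le_centralizer _).trans <|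
        Subgroup.centralizer_le (Set.singleton_subset_iff.2 (hmem R))
    exact Sylow.ext ((heq P).symm.trans (heq Q))
  have hP : (P : Subgroup G) ≠ ⊥ := fun h ↦
    hPQ (Sylow.ext (P.3 Q.2 (h.trans_le bot_le)).symm)
  have hKP : K ≤ Subgroup.centralizer (P : Set G) := by
    refine Subgroup.commutator_eq_bot_iff_le_centralizer.1 (eq_bot_iff.2 (hdisj ▸ ?_))
    exact le_inf (Subgroup.commutator_le_left _ _)
      (Subgroup.le_normalizer_iff_commutator_le_right.1 (hnorm P))
  have := hcomm P
  rw [hG.centralizer_sylow P hP] at hKP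
  rw [← MonoidHom.ker_eq_bot_iff, ← hK, ← hdisj, inf_eq_left.2 hKP]

lemma card_sylow_three (hG : IsEPPOGroup G) (hcard : Nat.card G = 12 ∨ Nat.card G = 24)
    (P : Sylow 3 G) (hP : Nat.card P = 3) : Nat.card (Sylow 3 G) = 4 := by
  have : IsCyclic P := isCyclic_of_prime_card hP
  have haut : Nat.card (MulAut P) = 2 := by rw [IsCyclic.card_mulAut, hP]; decide
  obtain ⟨d, hd, hmul⟩ := hG.exists_dvd_card_mulAut_mul_eq_index P fun h ↦ by simp [h] at hP
  rw [haut, Nat.dvd_prime Nat.prime_two] at hd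
  have hindex := (P : Subgroup G).card_mul_index
  rw [hP, ← hmul] at hindex
  have hmod : Nat.card (Sylow 3 G) % 3 = 1 := card_sylow_modEq_one 3 G
  rcases hd with rfl | rfl <;> omega

lemma card_ne_fifteen (hG : IsEPPOGroup G) : Nat.card G ≠ 15 := fun hcard ↦ by
  have := Fact.mk Nat.prime_five
  let P : Sylow 5 G := default
  have hP : Nat.card P = 5 := card_sylow_of_card_eq P (n := 1) (m := 3) hcard (by decide)
  have : IsCyclic P := isCyclic_of_prime_card hP
  have haut : Nat.card (MulAut P) = 4 := by rw [IsCyclic.card_mulAut, hP]; decide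
  obtain ⟨d, hd, hmul⟩ := hG.exists_dvd_card_mulAut_mul_eq_index P fun h ↦ by simp [h] at hP
  rw [haut] at hd
  have hindex := (P : Subgroup G).card_mul_index
  rw [hP, ← hmul, hcard] at hindex
  have hmod : Nat.card (Sylow 5 G) % 5 = 1 := card_sylow_modEq_one 5 G
  have hle : d ≤ 4 := Nat.le_of_dvd four_pos hd
  interval_cases d <;> omega

lemma card_sylow_two (hG : IsEPPOGroup G) (hcard : Nat.card G = 60) (P : Sylow 2 G)
    [IsMulCommutative P] (hP : Nat.card P = 4) : Nat.card (Sylow 2 G) = 5 := by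
  obtain ⟨d, hd, hmul⟩ := hG.exists_dvd_card_mulAut_mul_eq_index P fun h ↦ by simp [h] at hP
  have hindex := (P : Subgroup G).card_mul_index
  rw [hP, ← hmul, hcard] at hindex
  have haut := card_mulAut_dvd_factorial P
  rw [hP] at haut
  have hd3 : d ∣ Nat.gcd 24 15 := Nat.dvd_gcd (hd.trans haut) ⟨Nat.card (Sylow 2 G), by omega⟩
  rcases (Nat.dvd_prime Nat.prime_three).1 hd3 with rfl | rfl
  · obtain ⟨K, hK⟩ := exists_isComplement'_of_card_sylow_eq_index P (by rw [← hmul, one_mul])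
    have hKP := hK.card_mul_card
    rw [hP, hcard] at hKP
    exact absurd (by omega) (hG.subgroup K).card_ne_fifteen
  · omega

lemma exists_injective_perm_four (hG : IsEPPOGroup G)
    (hcard : Nat.card G = 12 ∨ Nat.card G = 24) :
    ∃ f : G →* Equiv.Perm (Fin 4), Function.Injective f := by
  have hP (P : Sylow 3 G) : Nat.card P = 3 := by
    obtain h | h := hcard
    · exact card_sylow_of_card_eq P (n := 1) (m := 4) h (by decide)
    · exact card_sylow_of_card_eq P (n := 1) (m := 8) h (by decide)
  have hcomm (P : Sylow 3 G) : IsMulCommutative P :=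
    have : IsCyclic P := isCyclic_of_prime_card (hP P)
    inferInstance
  have hfour := hG.card_sylow_three hcard default (hP default)
  have : Nontrivial (Sylow 3 G) := Finite.one_lt_card_iff_nontrivial.1 (by omega)
  exact exists_injective_perm_fin (hG.toPermHom_sylow_injective hcomm) hfour

lemma exists_injective_perm_five (hG : IsEPPOGroup G) (hcard : Nat.card G = 60) :
    ∃ f : G →* Equiv.Perm (Fin 5), Function.Injective f := by
  have hP (P : Sylow 2 G) : Nat.card P = 2 ^ 2 :=
    card_sylow_of_card_eq P (m := 15) hcard (by decide)
  have hcomm (P : Sylow 2 G) := IsPGroup.isMulCommutative_of_card_eq_prime_sq (hP P)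
  have := hcomm default
  have hfive := hG.card_sylow_two hcard default (hP default)
  have : Nontrivial (Sylow 2 G) := Finite.one_lt_card_iff_nontrivial.1 (by omega)
  exact exists_injective_perm_fin (hG.toPermHom_sylow_injective hcomm) hfive

theorem isPolyhedralGroup (hG : IsEPPOGroup G)
    (hcard : Nat.card G = 12 ∨ Nat.card G = 24 ∨ Nat.card G = 60) : IsPolyhedralGroup G := by
  rcases hcard with h | h | h
  · obtain ⟨f, hf⟩ := hG.exists_injective_perm_four (.inl h)
    exact .inr (.inr (.inl (nonempty_mulEquiv_alternatingGroup hf (by rw [h]; decide))))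
  · obtain ⟨f, hf⟩ := hG.exists_injective_perm_four (.inr h)
    exact .inr (.inr (.inr (.inl (nonempty_mulEquiv_perm hf (by rw [h]; decide)))))
  · obtain ⟨f, hf⟩ := hG.exists_injective_perm_five h
    exact .inr (.inr (.inr (.inr (nonempty_mulEquiv_alternatingGroup hf (by rw [h]; decide)))))

end IsEPPOGroup

/-! ### Actions in which nontrivial elements fix two points -/

lemma stabilizer_order_le_five {N e f g x y z : ℕ} (hf : 2 ≤ f) (hg : 2 ≤ g) (hx : e * x = N)
    (hy : f * y = N) (hz : g * z = N) (hsum : x + y + z = N + 2) (hx2 : 2 < x) : e ≤ 5 := by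
  have h2y : 2 * y ≤ N := hy ▸ Nat.mul_le_mul_right y hf
  have h2z : 2 * z ≤ N := hz ▸ Nat.mul_le_mul_right z hg
  have hyz : f = 2 ∧ g = 2 ∨ 3 * y ≤ N ∨ 3 * z ≤ N := by
    rcases hf.eq_or_lt with rfl | hf
    · rcases hg.eq_or_lt with rfl | hg
      · exact .inl ⟨rfl, rfl⟩
      · exact .inr (.inr (hz ▸ Nat.mul_le_mul_right z hg))
    · exact .inr (.inl (hy ▸ Nat.mul_le_mul_right y hf))
  by_contra! he
  have h6x : 6 * x ≤ N := hx ▸ Nat.mul_le_mul_right x he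
  rcases hyz with ⟨rfl, rfl⟩ | hyz <;> omega

/-- Here `e`, `f`, `g` are stabilizer orders and `x`, `y`, `z` orbit sizes; dividing `hsum` by `N`
gives the familiar equation `1 / e + 1 / f + 1 / g = 1 + 2 / N`. -/
lemma group_order_of_three_orbits {N e f g x y z : ℕ} (he : 2 ≤ e) (hf : 2 ≤ f) (hg : 2 ≤ g)
    (hx : e * x = N) (hy : f * y = N) (hz : g * z = N) (hsum : x + y + z = N + 2) (hx2 : 2 < x)
    (hy2 : 2 < y) (hz2 : 2 < z) :
    (N = 12 ∨ N = 24 ∨ N = 60) ∧ e ≤ 5 ∧ f ≤ 5 ∧ g ≤ 5 := by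
  have he5 := stabilizer_order_le_five hf hg hx hy hz hsum hx2
  have hf5 := stabilizer_order_le_five hg he hy hz hx (by omega) hy2
  have hg5 := stabilizer_order_le_five he hf hz hx hy (by omega) hz2
  refine ⟨?_, he5, hf5, hg5⟩
  interval_cases e <;> interval_cases f <;> interval_cases g <;> omega

lemma orbit_sizes_of_burnside {Ω : Type*} [Fintype Ω] {N : ℕ} (hN : 1 < N) {e m : Ω → ℕ}
    (he : ∀ ω, 2 ≤ e ω) (hem : ∀ ω, e ω * m ω = N)
    (hsum : ∑ ω, m ω + 2 * (N - 1) = Fintype.card Ω * N) :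
    (∃ ω, m ω ≤ 2) ∨ (N = 12 ∨ N = 24 ∨ N = 60) ∧ ∀ ω, e ω ≤ 5 := by
  classical
  refine or_iff_not_imp_left.2 fun hm ↦ ?_
  push Not at hm
  have hle : 2 * ∑ ω, m ω ≤ Fintype.card Ω * N := by
    rw [Finset.mul_sum, ← smul_eq_mul (Fintype.card Ω), ← Finset.card_univ]
    exact Finset.sum_le_card_nsmul _ _ _ fun ω _ ↦ hem ω ▸ Nat.mul_le_mul_right _ (he ω)
  have hlt : Fintype.card Ω < 4 := by
    by_contra! h
    have := Nat.mul_le_mul_right N h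
    omega
  have hgt : 2 < Fintype.card Ω := by
    by_contra! h
    have hN2 := Nat.mul_le_mul_right N h
    obtain _ | ⟨⟨ω⟩⟩ := isEmpty_or_nonempty Ω
    · simp only [Finset.univ_eq_empty, Finset.sum_empty, Fintype.card_eq_zero] at hsum
      omega
    · have := Finset.single_le_sum (fun ω _ ↦ (m ω).zero_le) (Finset.mem_univ ω)
      have := hm ω
      omega
  have hthree : Fintype.card Ω = 3 := by omega
  obtain ⟨a, b, c, hab, hac, hbc, huniv⟩ :=
    Finset.card_eq_three.1 (Finset.card_univ.trans hthree)
  rw [hthree, huniv, Finset.sum_insert (by simp [hab, hac]), Finset.sum_pair hbc] at hsum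
  obtain ⟨h, ha, hb, hc⟩ := group_order_of_three_orbits (he a) (he b) (he c) (hem a) (hem b)
    (hem c) (by omega) (hm a) (hm b) (hm c)
  have habc : ∀ ω ∈ ({a, b, c} : Finset Ω), e ω ≤ 5 := by simp [ha, hb, hc]
  exact ⟨h, fun ω ↦ habc ω (huniv ▸ Finset.mem_univ ω)⟩

section Action

variable {G X : Type*} [Group G] [MulAction G X]

/-- The points with nontrivial stabilizer, as an invariant subset: for a group of rotations of the
sphere, the poles of its axes. -/
def poles (G X : Type*) [Group G] [MulAction G X] : SubMulAction G X where
  carrier := {x | stabilizer G x ≠ ⊥}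
  smul_mem' g x hx h := hx <| by
    rwa [stabilizer_smul_eq_stabilizer_map_conj,
      Subgroup.map_eq_bot_iff_of_injective _ (MulAut.conj g).injective] at h

lemma mem_poles_iff {x : X} : x ∈ poles G X ↔ ∃ g : G, g ≠ 1 ∧ g • x = x := by
  change stabilizer G x ≠ ⊥ ↔ _
  rw [Subgroup.ne_bot_iff_exists_ne_one]
  simp [and_comm]

lemma finite_poles [Finite G] (hfix : ∀ g : G, g ≠ 1 → (fixedBy X g).Finite) :
    Finite (poles G X) := by
  refine Set.Finite.subset (Set.Finite.biUnion (Set.toFinite {g : G | g ≠ 1}) hfix) fun x hx ↦ ?_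
  obtain ⟨g, hg, hgx⟩ := mem_poles_iff.1 hx
  exact Set.mem_biUnion (x := g) hg hgx

lemma natCard_fixedBy_poles {g : G} (hg : g ≠ 1) :
    Nat.card (fixedBy (poles G X) g) = (fixedBy X g).ncard :=
  Nat.card_congr ⟨fun x ↦ ⟨x, congrArg Subtype.val x.2⟩,
    fun x ↦ ⟨⟨x, mem_poles_iff.2 ⟨g, hg, x.2⟩⟩, Subtype.ext x.2⟩, fun _ ↦ rfl, fun _ ↦ rfl⟩

lemma natCard_add_mul_eq_natCard_orbits_mul [Finite G] [Finite X] {k : ℕ}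
    (hfix : ∀ g : G, g ≠ 1 → Nat.card (fixedBy X g) = k) :
    Nat.card X + k * (Nat.card G - 1) = Nat.card (orbitRel.Quotient G X) * Nat.card G := by
  classical
  have := Fintype.ofFinite G
  have := Fintype.ofFinite X
  have := Fintype.ofFinite (orbitRel.Quotient G X)
  simp only [Nat.card_eq_fintype_card] at hfix ⊢
  rw [← sum_card_fixedBy_eq_card_orbits_mul_card_group,
    ← Finset.add_sum_erase _ _ (Finset.mem_univ (1 : G)),
    Finset.sum_congr rfl fun g hg ↦ hfix g (Finset.ne_of_mem_erase hg), Finset.sum_const,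
    Finset.card_erase_of_mem (Finset.mem_univ _), Finset.card_univ, smul_eq_mul, mul_comm k]
  simp

lemma index_stabilizer_le_two_or [Finite G] [Finite X] (hG : 1 < Nat.card G)
    (hfix : ∀ g : G, g ≠ 1 → Nat.card (fixedBy X g) = 2) (hstab : ∀ x : X, stabilizer G x ≠ ⊥) :
    (∃ x : X, (stabilizer G x).index ≤ 2) ∨
      (Nat.card G = 12 ∨ Nat.card G = 24 ∨ Nat.card G = 60) ∧
        ∀ x : X, Nat.card (stabilizer G x) ≤ 5 := by
  have := Fintype.ofFinite (orbitRel.Quotient G X)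
  have hcount := natCard_add_mul_eq_natCard_orbits_mul hfix
  rw [Nat.card_congr (selfEquivSigmaOrbitsQuotientStabilizer G X), Nat.card_sigma,
    Nat.card_eq_fintype_card (α := orbitRel.Quotient G X)] at hcount
  have hcard_stab (ω : orbitRel.Quotient G X) : 2 ≤ Nat.card (stabilizer G ω.out) :=
    (Subgroup.one_lt_card_iff_ne_bot _).2 (hstab ω.out)
  obtain ⟨ω, hω⟩ | ⟨hcard, hle⟩ := orbit_sizes_of_burnside hG hcard_stab
    (fun ω ↦ (stabilizer G ω.out).card_mul_index) hcount
  · exact .inl ⟨ω.out, hω⟩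
  · refine .inr ⟨hcard, fun x ↦ ?_⟩
    have e := stabilizerEquivStabilizerOfOrbitRel (Quotient.mk_out (s := orbitRel G X) x)
    exact (Nat.card_congr e.toEquiv).symm.trans_le (hle _)

/-- Otherwise `g * g` would fix three points: `x`, `g • x` and a fixed point of `g`. -/
lemma mul_self_eq_one_of_index_stabilizer_eq_two
    (hfix : ∀ g : G, g ≠ 1 → (fixedBy X g).ncard = 2) {x : X} (hx : (stabilizer G x).index = 2)
    {g : G} (hg : g ∉ stabilizer G x) : g * g = 1 := by
  by_contra hgg
  have hggx : g * g ∈ stabilizer G x := Subgroup.mul_self_mem_of_index_two hx g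
  have hgx : g • x ≠ x := hg
  obtain ⟨y, hy⟩ : (fixedBy X g).Nonempty := Set.nonempty_of_ncard_ne_zero <| by
    rw [hfix g (ne_of_mem_of_not_mem (one_mem _) hg).symm]
    exact two_ne_zero
  have hy : g • y = y := hy
  have hyx : y ≠ x := fun h ↦ hgx (h ▸ hy)
  have hygx : y ≠ g • x := fun h ↦ hyx (smul_left_cancel g (hy.trans h))
  have hsub : {x, g • x, y} ⊆ fixedBy X (g * g) := by
    rintro z (rfl | rfl | rfl)
    · exact hggx
    · rw [mem_fixedBy, smul_smul, mul_assoc, mul_smul, mem_stabilizer_iff.1 hggx]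
    · rw [mem_fixedBy, mul_smul, hy, hy]
  have hthree : ({x, g • x, y} : Set X).ncard = 3 :=
    Set.ncard_eq_three.2 ⟨x, g • x, y, hgx.symm, hyx.symm, hygx.symm, rfl⟩
  have hle := Set.ncard_le_ncard hsub
    (Set.finite_of_ncard_ne_zero ((hfix _ hgg).trans_ne two_ne_zero))
  rw [hthree, hfix _ hgg] at hle
  omega

theorem isPolyhedralGroup_of_ncard_fixedBy_eq_two [Finite G]
    (hfix : ∀ g : G, g ≠ 1 → (fixedBy X g).ncard = 2)
    (hcyc : ∀ x : X, IsCyclic (stabilizer G x)) : IsPolyhedralGroup G := by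
  obtain _ | _ := subsingleton_or_nontrivial G
  · exact .of_isCyclic inferInstance
  have := finite_poles fun g hg ↦ Set.finite_of_ncard_ne_zero ((hfix g hg).trans_ne two_ne_zero)
  have hfix' (g : G) (hg : g ≠ 1) : Nat.card (fixedBy (poles G X) g) = 2 :=
    (natCard_fixedBy_poles hg).trans (hfix g hg)
  have hstab (y : poles G X) : stabilizer G y = stabilizer G (y : X) :=
    SubMulAction.stabilizer_of_subMul y
  obtain ⟨y, hy⟩ | ⟨hcard, hle⟩ := index_stabilizer_le_two_or Finite.one_lt_card hfix' fun y ↦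
    (hstab y).symm ▸ y.2
  · rw [hstab] at hy
    have := hcyc y
    obtain htwo | hlt := hy.eq_or_lt
    · exact .inr (.inl ⟨_, (Subgroup.one_lt_card_iff_ne_bot _).2 y.2,
        nonempty_mulEquiv_dihedralGroup _ htwo fun g hg ↦
          mul_self_eq_one_of_index_stabilizer_eq_two hfix htwo hg⟩)
    · have hone : (stabilizer G (y : X)).index = 1 := by
        have := Subgroup.index_ne_zero_of_finite (H := stabilizer G (y : X))
        omega
      exact .of_isCyclic (isCyclic_of_surjective (stabilizer G (y : X)).subtype fun g ↦
        ⟨⟨g, Subgroup.index_eq_one.1 hone ▸ Subgroup.mem_top g⟩, rfl⟩)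
  · refine (IsEPPOGroup.of_orderOf_le_five fun g ↦ ?_).isPolyhedralGroup hcard
    obtain rfl | hg := eq_or_ne g 1
    · simp
    obtain ⟨⟨y, hy⟩⟩ := (Nat.card_pos_iff.1 (hfix' g hg ▸ two_pos)).1
    exact (Subgroup.orderOf_le_card _ (Set.toFinite _) hy).trans (hle y)

end Action

/-! ### Fixed points on the projective line -/

section Eigenvectors

variable {K V : Type*} [Field K] [AddCommGroup V] [Module K V]

lemma isSemisimple_of_pow_eq_algebraMap {f : Module.End K V} {m : ℕ} {c : K} (hm : (m : K) ≠ 0)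
    (hc : c ≠ 0) (hf : f ^ m = algebraMap K _ c) : f.IsSemisimple :=
  Module.End.isSemisimple_of_squarefree_aeval_eq_zero
    (Polynomial.separable_X_pow_sub_C c hm hc).squarefree (by simp [hf])

lemma exists_hasEigenvector_ne_of_isSemisimple [IsAlgClosed K] [FiniteDimensional K V]
    {f : Module.End K V} (hf : f.IsSemisimple) (hscalar : ∀ c, f ≠ algebraMap K _ c) :
    ∃ r s u v, r ≠ s ∧ f.HasEigenvector r u ∧ f.HasEigenvector s v := by
  have : Nontrivial V := by
    by_contra! h
    exact hscalar 0 (Subsingleton.elim _ _)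
  obtain ⟨r, hr⟩ := f.exists_eigenvalue
  obtain ⟨u, hu⟩ := hr.exists_hasEigenvector
  obtain ⟨s, hs, hne⟩ : ∃ s, f.HasEigenvalue s ∧ r ≠ s := by
    by_contra! h
    refine hscalar r (sub_eq_zero.1 ?_)
    refine (Module.End.isSemisimple_sub_algebraMap_iff.2 hf).eq_zero_iff_forall_eigenvalue.2
      fun t ht ↦ ?_
    obtain ⟨w, hw⟩ := ht.exists_hasEigenvector
    have hfw : f w = (t + r) • w := by
      rw [add_smul, ← hw.apply_eq_smul]
      simp
    have := h _ (Module.End.hasEigenvalue_of_hasEigenvector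
      (Module.End.hasEigenvector_iff.2 ⟨Module.End.mem_eigenspace_iff.2 hfw, hw.2⟩))
    simpa using this
  obtain ⟨v, hv⟩ := hs.exists_hasEigenvector
  exact ⟨r, s, u, v, hne, hu, hv⟩

lemma mem_span_singleton_or_of_hasEigenvector {f : Module.End K V} (hV : Module.finrank K V = 2)
    {r s t : K} {u v w : V} (hrs : r ≠ s) (hu : f.HasEigenvector r u) (hv : f.HasEigenvector s v)
    (hw : f.HasEigenvector t w) : (∃ a : K, a • u = w) ∨ ∃ a : K, a • v = w := by
  have hli : LinearIndependent K ![u, v] :=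
    f.eigenvectors_linearIndependent' ![r, s] (by simp [Function.Injective, hrs, hrs.symm]) _
      (by simp [Fin.forall_fin_two, hu, hv])
  have hspan : Submodule.span K {u, v} = ⊤ := by
    rw [← hli.span_eq_top_of_card_eq_finrank (by simp [hV]), Matrix.range_cons_cons_empty]
  obtain ⟨a, b, rfl⟩ := Submodule.mem_span_pair.1 (hspan ▸ Submodule.mem_top : w ∈ _)
  have hfw := hw.apply_eq_smul
  rw [map_add, map_smul, map_smul, hu.apply_eq_smul, hv.apply_eq_smul, ← sub_eq_zero] at hfw
  obtain ⟨ha, hb⟩ := LinearIndependent.pair_iff.1 hli (a * (r - t)) (b * (s - t)) <| by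
    rw [← hfw]
    module
  obtain rfl | ha := mul_eq_zero.1 ha
  · exact .inr ⟨b, by simp⟩
  · obtain rfl | hb := mul_eq_zero.1 hb
    · exact .inl ⟨a, by simp⟩
    · exact absurd ((sub_eq_zero.1 ha).trans (sub_eq_zero.1 hb).symm) hrs

end Eigenvectors

open Matrix

section SpecialLinear

variable {n K : Type*} [Fintype n] [DecidableEq n] [Field K]

lemma projectivization_smul_mk_eq_self_iff (A : Matrix.SpecialLinearGroup n K) {u : n → K}
    (hu : u ≠ 0) :
    A • Projectivization.mk K u hu = Projectivization.mk K u hu ↔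
      ∃ r, Module.End.HasEigenvector (toLin' A.1) r u := by
  rw [Projectivization.smul_mk, Projectivization.mk_eq_mk_iff']
  simp only [Module.End.hasEigenvector_iff, Module.End.mem_eigenspace_iff, hu, ne_eq,
    not_false_eq_true, and_true]
  exact exists_congr fun r ↦ eq_comm

lemma mem_center_of_toLin'_eq_algebraMap {A : Matrix.SpecialLinearGroup n K} {c : K}
    (h : (toLin' A.1 : Module.End K (n → K)) = algebraMap K _ c) :
    A ∈ Subgroup.center (Matrix.SpecialLinearGroup n K) := by
  have hA : scalar n c = A.1 := toLin'.injective ((toLinAlgEquiv'.commutes c).trans h.symm)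
  refine Matrix.SpecialLinearGroup.mem_center_iff.2 ⟨c, ?_, hA⟩
  rw [← A.det_coe, ← hA, scalar_apply, det_diagonal, Finset.prod_const, Finset.card_univ]

lemma toLin'_isSemisimple_of_pow_mem_center [Nonempty n] {A : Matrix.SpecialLinearGroup n K}
    {m : ℕ} (hm : (m : K) ≠ 0)
    (hA : A ^ m ∈ Subgroup.center (Matrix.SpecialLinearGroup n K)) :
    Module.End.IsSemisimple (toLin' A.1) := by
  obtain ⟨c, hc, hAc⟩ := Matrix.SpecialLinearGroup.mem_center_iff.1 hA
  refine isSemisimple_of_pow_eq_algebraMap hm (c := c) ?_ ?_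
  · rintro rfl
    simp at hc
  · rw [← toLin'_pow, ← Matrix.SpecialLinearGroup.coe_pow, ← hAc]
    exact toLinAlgEquiv'.commutes c

lemma ncard_fixedBy_of_pow_mem_center [IsAlgClosed K] {A : SL(2, K)} {m : ℕ} (hm : (m : K) ≠ 0)
    (hA : A ^ m ∈ Subgroup.center SL(2, K)) (hAc : A ∉ Subgroup.center SL(2, K)) :
    (fixedBy (ℙ K (Fin 2 → K)) A).ncard = 2 := by
  obtain ⟨r, s, u, v, hrs, hu, hv⟩ := exists_hasEigenvector_ne_of_isSemisimple
    (toLin'_isSemisimple_of_pow_mem_center hm hA)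
    fun c h ↦ hAc (mem_center_of_toLin'_eq_algebraMap h)
  refine Set.ncard_eq_two.2 ⟨.mk K u hu.2, .mk K v hv.2, fun h ↦ ?_, ?_⟩
  · obtain ⟨a, rfl⟩ := (Projectivization.mk_eq_mk_iff' K _ _ _ _).1 h
    have hs := Module.End.mem_eigenspace_iff.1 (Submodule.smul_mem _ a hv.1)
    exact hrs (smul_left_injective K hu.2 (hu.apply_eq_smul.symm.trans hs))
  · ext x
    induction x using Projectivization.ind with | _ w hw =>
    simp only [mem_fixedBy, Set.mem_insert_iff, Set.mem_singleton_iff]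
    constructor
    · intro h
      obtain ⟨t, ht⟩ := (projectivization_smul_mk_eq_self_iff A hw).1 h
      simp only [Projectivization.mk_eq_mk_iff']
      exact mem_span_singleton_or_of_hasEigenvector (by simp) hrs hu hv ht
    · rintro (h | h) <;> rw [h, projectivization_smul_mk_eq_self_iff]
      exacts [⟨r, hu⟩, ⟨s, hv⟩]

lemma eq_one_of_hasEigenvector_one {A : SL(2, K)} {m : ℕ} (hm : (m : K) ≠ 0)
    (hA : A ^ m ∈ Subgroup.center SL(2, K)) {u : Fin 2 → K}
    (hu : Module.End.HasEigenvector (toLin' A.1) 1 u) : A = 1 := by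
  have hdet : (A.1 - 1).det = 0 :=
    exists_mulVec_eq_zero_iff.1 ⟨u, hu.2, by
      rw [sub_mulVec, one_mulVec, sub_eq_zero, ← toLin'_apply, hu.apply_eq_smul, one_smul]⟩
  have htrace : A.1.trace = 2 := by
    have hA1 := A.det_coe
    simp only [det_fin_two, Matrix.sub_apply, one_apply_eq, ne_eq, zero_ne_one, one_ne_zero,
      not_false_eq_true, one_apply_ne, sub_zero] at hA1 hdet
    rw [trace_fin_two]
    linear_combination hA1 - hdet
  have hsq : (A.1 - 1) ^ 2 = 0 := by
    have := aeval_self_charpoly A.1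
    rw [charpoly_fin_two, htrace, A.det_coe] at this
    simp only [map_add, map_sub, map_mul, map_pow, Polynomial.aeval_X, Polynomial.aeval_C] at this
    rw [← this, map_ofNat, map_one]
    noncomm_ring
  have hss : Module.End.IsSemisimple (toLin' (A.1 - 1)) := by
    have := (Module.End.isSemisimple_sub_algebraMap_iff (μ := 1)).2
      (toLin'_isSemisimple_of_pow_mem_center hm hA)
    rw [map_one] at this
    rwa [map_sub, toLin'_one]
  have hzero := Module.End.eq_zero_of_isNilpotent_isSemisimple
    ⟨2, by rw [← toLin'_pow, hsq, map_zero]⟩ hss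
  exact Subtype.ext (sub_eq_zero.1 (toLin'.map_eq_zero_iff.1 hzero))

end SpecialLinear

section ProjectiveSpecialLinear

variable {n K : Type*} [Fintype n] [DecidableEq n] [Field K]

lemma finite_preimage_mk (G : Subgroup (ProjectiveSpecialLinearGroup n K)) [Finite G] :
    Finite (QuotientGroup.mk (s := Subgroup.center (Matrix.SpecialLinearGroup n K)) ⁻¹' G) := by
  have : NeZero (max (Fintype.card n) 1) := ⟨by omega⟩
  have : Finite (Subgroup.center (Matrix.SpecialLinearGroup n K)) :=
    .of_equiv _ Matrix.SpecialLinearGroup.center_equiv_rootsOfUnity.symm.toEquiv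
  have : Finite (G : Set (ProjectiveSpecialLinearGroup n K)) := ‹Finite G›
  exact .of_equiv _ (QuotientGroup.preimageMkEquivSubgroupProdSet _ _).symm

lemma isCyclic_of_forall_projectivization_smul_eq {H : Subgroup SL(2, K)} [Finite H] {m : ℕ}
    (hm : (m : K) ≠ 0) (hH : ∀ A ∈ H, A ^ m ∈ Subgroup.center SL(2, K))
    {x : ℙ K (Fin 2 → K)} (hx : ∀ A ∈ H, A • x = x) : IsCyclic H := by
  induction x using Projectivization.ind with | _ u hu =>
  choose χ hχ using fun A : H ↦ (projectivization_smul_mk_eq_self_iff A.1 hu).1 (hx A A.2)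
  have happly (A : H) : A.1.1 *ᵥ u = χ A • u := (hχ A).apply_eq_smul
  have hinj := smul_left_injective K hu
  let f : H →* K :=
    { toFun := χ
      map_one' := hinj (by simp [← happly])
      map_mul' A B := hinj <| by
        simp only [← happly, Subgroup.coe_mul, Matrix.SpecialLinearGroup.coe_mul]
        rw [← mulVec_mulVec, happly, mulVec_smul, happly, smul_smul, mul_comm] }
  refine isCyclic_of_injective_ringHom f ((injective_iff_map_eq_one f).2 fun A hA ↦ ?_)
  have hA : χ A = 1 := hA
  exact Subtype.ext (eq_one_of_hasEigenvector_one hm (hH A A.2) (hA ▸ hχ A))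

lemma pow_natCard_mem_center {G : Subgroup (ProjectiveSpecialLinearGroup n K)}
    {A : Matrix.SpecialLinearGroup n K} (hA : (A : ProjectiveSpecialLinearGroup n K) ∈ G) :
    A ^ Nat.card G ∈ Subgroup.center (Matrix.SpecialLinearGroup n K) :=
  (QuotientGroup.eq_one_iff _).1 (congrArg Subtype.val (pow_card_eq_one' (x := (⟨A, hA⟩ : G))))

variable {G : Subgroup PSL(2, K)}

lemma isCyclic_stabilizer_projectivization (hG : (Nat.card G : K) ≠ 0) (x : ℙ K (Fin 2 → K)) :
    IsCyclic (stabilizer G x) := by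
  have : Finite G := Nat.finite_of_card_ne_zero fun h ↦ hG (by rw [h, Nat.cast_zero])
  let π := QuotientGroup.mk' (Subgroup.center SL(2, K))
  let H := G.comap π ⊓ stabilizer SL(2, K) x
  have := finite_preimage_mk G
  have : Finite H := (Set.toFinite (QuotientGroup.mk ⁻¹' (G : Set PSL(2, K)))).subset fun _ h ↦ h.1
  have : IsCyclic H :=
    isCyclic_of_forall_projectivization_smul_eq hG (fun _ hA ↦ pow_natCard_mem_center hA.1)
      fun _ hA ↦ hA.2
  let f : H →* stabilizer G x :=
    { toFun A := ⟨⟨π A, A.2.1⟩, A.2.2⟩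
      map_one' := rfl
      map_mul' _ _ := rfl }
  refine isCyclic_of_surjective f ?_
  rintro ⟨⟨g, hg⟩, hgx⟩
  obtain ⟨A, rfl⟩ := QuotientGroup.mk_surjective g
  exact ⟨⟨A, hg, hgx⟩, rfl⟩

lemma ncard_fixedBy_projectivization [IsAlgClosed K] (hG : (Nat.card G : K) ≠ 0) {g : G}
    (hg : g ≠ 1) : (fixedBy (ℙ K (Fin 2 → K)) g).ncard = 2 := by
  obtain ⟨g, hgG⟩ := g
  obtain ⟨A, rfl⟩ := QuotientGroup.mk_surjective g
  exact ncard_fixedBy_of_pow_mem_center hG (pow_natCard_mem_center hgG)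
    fun hA ↦ hg (Subtype.ext ((QuotientGroup.eq_one_iff A).2 hA))

section FieldExtension

variable {L : Type*} [Field L] (φ : K →+* L)

lemma comap_map_center :
    (Subgroup.center (Matrix.SpecialLinearGroup n L)).comap (Matrix.SpecialLinearGroup.map φ) =
      Subgroup.center (Matrix.SpecialLinearGroup n K) := by
  have hinj : Function.Injective (Matrix.SpecialLinearGroup.map (n := n) φ) := fun A B h ↦
    Subtype.ext (map_injective φ.injective (congrArg Subtype.val h))
  ext A
  rw [Subgroup.mem_comap]
  constructor
  · simp only [Subgroup.mem_center_iff]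
    exact fun h B ↦ hinj (by rw [map_mul, map_mul, h])
  · simp only [Matrix.SpecialLinearGroup.mem_center_iff]
    rintro ⟨c, hc, hA⟩
    refine ⟨φ c, by rw [← map_pow, hc, map_one], ?_⟩
    rw [Matrix.SpecialLinearGroup.map_apply_coe, ← hA]
    simp

/-- The homomorphism of projective special linear groups induced by a field extension. -/
def projectiveSpecialLinearMap :
    ProjectiveSpecialLinearGroup n K →* ProjectiveSpecialLinearGroup n L :=
  QuotientGroup.map _ _ (Matrix.SpecialLinearGroup.map φ) (comap_map_center φ).ge

lemma projectiveSpecialLinearMap_injective :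
    Function.Injective (projectiveSpecialLinearMap (n := n) φ) := by
  rw [← MonoidHom.ker_eq_bot_iff, projectiveSpecialLinearMap, QuotientGroup.ker_map,
    comap_map_center, QuotientGroup.map_mk'_self]

end FieldExtension

lemma isPolyhedralGroup_of_isAlgClosed [IsAlgClosed K] (hG : (Nat.card G : K) ≠ 0) :
    IsPolyhedralGroup G := by
  have : Finite G := Nat.finite_of_card_ne_zero fun h ↦ hG (by rw [h, Nat.cast_zero])
  exact isPolyhedralGroup_of_ncard_fixedBy_eq_two (fun _ ↦ ncard_fixedBy_projectivization hG)
    (isCyclic_stabilizer_projectivization hG)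

end ProjectiveSpecialLinear

/-- Since `Nat.card G = 0` for infinite `G`, `hG` says that `G` is finite, of order prime to the
characteristic of `K`. -/
theorem polyhedral_group_classification_general {K : Type*} [Field K] (G : Subgroup PSL(2, K))
    (hG : (Nat.card G : K) ≠ 0) : IsPolyhedralGroup G := by
  let φ := algebraMap K (AlgebraicClosure K)
  let e := G.equivMapOfInjective _ (projectiveSpecialLinearMap_injective φ)
  refine .of_mulEquiv e (isPolyhedralGroup_of_isAlgClosed ?_)
  rw [← Nat.card_congr e.toEquiv, ← map_natCast φ]
  exact (map_ne_zero φ).2 hG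

/-- **Classification of polyhedral groups**: every finite subgroup of
`PSL(2, ℂ)` is cyclic, dihedral, or isomorphic to `A₄`, `S₄` or `A₅`. -/
theorem polyhedral_group_classification
    (G : Subgroup (Matrix.ProjectiveSpecialLinearGroup (Fin 2) ℂ))
    (hG : Finite G) :
    (∃ n : ℕ, 1 ≤ n ∧ Nonempty (G ≃* Multiplicative (ZMod n))) ∨
    (∃ n : ℕ, 2 ≤ n ∧ Nonempty (G ≃* DihedralGroup n)) ∨
    Nonempty (G ≃* alternatingGroup (Fin 4)) ∨
    Nonempty (G ≃* Equiv.Perm (Fin 4)) ∨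
    Nonempty (G ≃* alternatingGroup (Fin 5)) :=
  polyhedral_group_classification_general G (Nat.cast_ne_zero.2 Nat.card_pos.ne')
end

section
/- Let a = (1 2)(3 6) and b = (1 2 3 4 5 6 7) be permutations of a seven-element set (a is the product of the transpositions swapping 1 with 2 and 3 with 6; b is the 7-cycle). Then a has order 2, b has order 7, the product a·b has order 3, and the subgroup of the symmetric group generated by {a, b} is a simple group of cardinality 168. -/
/-!
A group acting faithfully on a set of prime size `p` has order not divisible by `p ^ 2`, and all
its nontrivial normal subgroups are transitive, so they contain every element of order `p`.
Hence the `7`-cycle `b` lies in every nontrivial normal subgroup; modulo `b` the relations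
`a ^ 2 = (a * b) ^ 3 = 1` kill `a` too, so the group `⟨a, b⟩` is simple.

Labelling the seven points by the nonzero vectors of `𝔽₂³`, both permutations become linear, so
`|⟨a, b⟩| ≤ |GL₃(𝔽₂)| = 168`. The element orders give `42 ∣ |⟨a, b⟩|`, and simplicity forces
the number of Sylow `7`-subgroups to be `8`, which leaves only the order `168`.
-/

open MulAction Subgroup

section Group

variable {G : Type*} [Group G]

theorem mem_of_coprime_orderOf_index {N : Subgroup G} [N.Normal] {g : G}
    (h : (orderOf g).Coprime N.index) : g ∈ N := by
  rw [← QuotientGroup.eq_one_iff, ← orderOf_eq_one_iff]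
  exact Nat.eq_one_of_dvd_coprimes h (orderOf_map_dvd (QuotientGroup.mk' N) g)
    (_root_.orderOf_dvd_natCard _)

theorem normalClosure_singleton_eq_top_of_coprime {a b : G} {m n : ℕ}
    (hgen : closure {a, b} = ⊤) (ha : a ^ m = 1) (hab : (a * b) ^ n = 1) (hmn : m.Coprime n) :
    normalClosure {b} = ⊤ := by
  have hb : b ∈ normalClosure {b} := subset_normalClosure rfl
  have hquot : ((a * b : G) : G ⧸ normalClosure {b}) = a := QuotientGroup.mk_mul_of_mem a hb
  have ha' : a ∈ normalClosure {b} := by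
    rw [← QuotientGroup.eq_one_iff, ← orderOf_eq_one_iff]
    refine Nat.eq_one_of_dvd_coprimes hmn (orderOf_dvd_of_pow_eq_one ?_)
      (orderOf_dvd_of_pow_eq_one ?_)
    · rw [← QuotientGroup.mk_pow, ha, QuotientGroup.mk_one]
    · rw [← hquot, ← QuotientGroup.mk_pow, hab, QuotientGroup.mk_one]
  rw [eq_top_iff, ← hgen, closure_le]
  exact Set.pair_subset ha' hb

theorem card_sylow_ne_one [Finite G] [IsSimpleGroup G] {p : ℕ} [Fact p.Prime]
    (hdvd : p ∣ Nat.card G) (hG : ¬ IsPGroup p G) : Nat.card (Sylow p G) ≠ 1 := by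
  intro hone
  have : Subsingleton (Sylow p G) := (Nat.card_eq_one_iff_unique.mp hone).1
  obtain ⟨P⟩ : Nonempty (Sylow p G) := inferInstance
  rcases P.normal_of_subsingleton.eq_bot_or_eq_top with hbot | htop
  · exact P.ne_bot_of_dvd_card hdvd hbot
  · exact hG ((htop ▸ P.isPGroup').of_equiv topEquiv)

theorem card_eq_168_of_isSimpleGroup [IsSimpleGroup G] [Finite G]
    (hdvd : 42 ∣ Nat.card G) (hle : Nat.card G ≤ 168) : Nat.card G = 168 := by
  have : Fact (Nat.Prime 7) := ⟨Nat.prime_seven⟩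
  have h7 : 7 ∣ Nat.card G := .trans (by norm_num) hdvd
  have hG : ¬ IsPGroup 7 G := by
    intro hG
    obtain ⟨n, hn⟩ := IsPGroup.iff_card.mp hG
    have h2 : 2 ∣ 7 ^ n := hn ▸ .trans (by norm_num) hdvd
    exact absurd (Nat.prime_two.dvd_of_dvd_pow h2) (by norm_num)
  obtain ⟨P⟩ : Nonempty (Sylow 7 G) := inferInstance
  obtain ⟨k, hk⟩ := hdvd
  have hindex : P.index ∣ 6 * k := by
    obtain ⟨m, hm⟩ := P.dvd_card_of_dvd_card h7
    have hcard : 7 * m * P.index = 42 * k := by rw [← hm, P.card_mul_index, hk]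
    exact ⟨m, by linarith⟩
  have hne : Nat.card (Sylow 7 G) ≠ 1 := card_sylow_ne_one h7 hG
  have hmod : Nat.card (Sylow 7 G) % 7 = 1 := card_sylow_modEq_one 7 G
  have hsylow : Nat.card (Sylow 7 G) ∣ 6 * k := P.card_dvd_index.trans hindex
  have hpos : 0 < Nat.card G := Nat.card_pos
  have hsylow_le : Nat.card (Sylow 7 G) ≤ 6 * k := Nat.le_of_dvd (by lia) hsylow
  have hcases : Nat.card (Sylow 7 G) = 8 ∨ Nat.card (Sylow 7 G) = 15 ∨
      Nat.card (Sylow 7 G) = 22 := by lia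
  rcases hcases with h | h | h <;> rw [h] at hsylow <;> lia

end Group

section PrimeDegree

variable {G X : Type*} [Group G] [MulAction G X] [FaithfulSMul G X]

theorem isPretransitive_of_orderOf_eq_card {g : G} (hX : (Nat.card X).Prime)
    (hg : orderOf g = Nat.card X) : IsPretransitive G X := by
  have : Finite X := Nat.finite_of_card_ne_zero hX.ne_zero
  have : Fintype X := .ofFinite X
  classical
  have horder : orderOf (toPermHom G X g) = Fintype.card X := by
    rw [orderOf_injective _ toPerm_injective, hg, Nat.card_eq_fintype_card]
  have hcycle : (toPermHom G X g).IsCycle :=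
    Equiv.Perm.isCycle_of_prime_order'' (Nat.card_eq_fintype_card (α := X) ▸ hX) horder
  have hsupport : (toPermHom G X g).support = Finset.univ := by
    rw [← Finset.card_eq_iff_eq_univ, ← hcycle.orderOf, horder]
  have hmoved (x : X) : toPermHom G X g x ≠ x :=
    Equiv.Perm.mem_support.mp (hsupport ▸ Finset.mem_univ x)
  refine ⟨fun x y => ?_⟩
  obtain ⟨i, hi⟩ := hcycle.exists_zpow_eq (hmoved x) (hmoved y)
  exact ⟨g ^ i, by rwa [← map_zpow] at hi⟩

theorem not_card_sq_dvd_card_of_faithfulSMul (hX : (Nat.card X).Prime) :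
    ¬ Nat.card X ^ 2 ∣ Nat.card G := by
  have : Finite X := Nat.finite_of_card_ne_zero hX.ne_zero
  intro h
  have hfact : Nat.card X ^ 2 ∣ (Nat.card X).factorial := by
    rw [← Nat.card_perm]
    exact h.trans (card_dvd_of_injective (toPermHom G X) toPerm_injective)
  rw [← Nat.mul_factorial_pred hX.ne_zero, sq, Nat.mul_dvd_mul_iff_left hX.pos,
    hX.dvd_factorial] at hfact
  exact absurd hfact (Nat.sub_one_lt hX.ne_zero).not_ge

theorem card_dvd_card_of_normal_ne_bot [IsQuasiPreprimitive G X] [Nonempty X] {N : Subgroup G}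
    [N.Normal] (hN : N ≠ ⊥) : Nat.card X ∣ Nat.card N := by
  have hfix : fixedPoints N X ≠ Set.univ := by
    contrapose hN
    refine (eq_bot_iff_forall N).mpr fun n hn => FaithfulSMul.eq_of_smul_eq_smul fun x : X => ?_
    have hx : x ∈ fixedPoints N X := hN ▸ Set.mem_univ x
    rw [one_smul]
    exact hx ⟨n, hn⟩
  have : IsPretransitive N X := IsQuasiPreprimitive.isPretransitive_of_normal hfix
  rw [← index_stabilizer_of_transitive N (Classical.arbitrary X)]
  exact index_dvd_card _

theorem isSimpleGroup_of_normalClosure_eq_top {g : G} (hX : (Nat.card X).Prime)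
    (hg : orderOf g = Nat.card X) (htop : normalClosure {g} = ⊤) : IsSimpleGroup G := by
  have : IsPretransitive G X := isPretransitive_of_orderOf_eq_card hX hg
  have : IsPreprimitive G X := .of_prime_card hX
  have : Nonempty X := (Nat.card_pos_iff.mp hX.pos).1
  have : Nontrivial G := ⟨g, 1, fun h => hX.ne_one (by rw [← hg, h, orderOf_one])⟩
  refine ⟨fun N hN => or_iff_not_imp_left.mpr fun hbot => ?_⟩
  have hindex : ¬ Nat.card X ∣ N.index := fun h => not_card_sq_dvd_card_of_faithfulSMul hX <| by
    rw [← N.card_mul_index, sq]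
    exact mul_dvd_mul (card_dvd_card_of_normal_ne_bot hbot) h
  have hgN : g ∈ N := mem_of_coprime_orderOf_index (hg ▸ hX.coprime_iff_not_dvd.mpr hindex)
  rw [eq_top_iff, ← htop]
  exact normalClosure_le_normal (Set.singleton_subset_iff.mpr hgN)

end PrimeDegree

theorem isSimpleGroup_closure_pair {X : Type*} {a b : Equiv.Perm X} {m n : ℕ}
    (hX : (Nat.card X).Prime) (hb : orderOf b = Nat.card X) (ha : a ^ m = 1)
    (hab : (a * b) ^ n = 1) (hmn : m.Coprime n) : IsSimpleGroup (closure {a, b}) := by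
  let a' : closure {a, b} := ⟨a, subset_closure (Set.mem_insert a {b})⟩
  let b' : closure {a, b} := ⟨b, subset_closure (Set.mem_insert_of_mem a rfl)⟩
  have hgen : closure {a', b'} = ⊤ := by
    rw [← closure_closure_coe_preimage (k := {a, b})]
    congr 1
    ext g
    simp only [a', b', Set.mem_insert_iff, Set.mem_singleton_iff, Set.mem_preimage, Subtype.ext_iff]
  exact isSimpleGroup_of_normalClosure_eq_top (X := X) (g := b') hX
    ((orderOf_mk b _).trans hb)
    (normalClosure_singleton_eq_top_of_coprime hgen (Subtype.ext ha) (Subtype.ext hab) hmn)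

theorem card_closure_le_of_forall_exists_smul_eq {H X Y : Type*} [Group H] [Finite H]
    [MulAction H Y] {f : X → Y} (hf : f.Injective) {S : Set (Equiv.Perm X)}
    (hS : ∀ g ∈ S, ∃ h : H, ∀ x, h • f x = f (g x)) :
    Nat.card (closure S) ≤ Nat.card H := by
  have hlift : ∀ g ∈ closure S, ∃ h : H, ∀ x, h • f x = f (g x) := by
    intro g hg
    induction hg using closure_induction with
    | mem g hg => exact hS g hg
    | one => exact ⟨1, fun x => one_smul H (f x)⟩
    | mul g₁ g₂ _ _ ih₁ ih₂ =>
      obtain ⟨h₁, hh₁⟩ := ih₁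
      obtain ⟨h₂, hh₂⟩ := ih₂
      exact ⟨h₁ * h₂, fun x => by rw [mul_smul, hh₂, hh₁, Equiv.Perm.mul_apply]⟩
    | inv g _ ih =>
      obtain ⟨h, hh⟩ := ih
      exact ⟨h⁻¹, fun x => by rw [inv_smul_eq_iff, hh, ← Equiv.Perm.mul_apply, mul_inv_cancel,
        Equiv.Perm.one_apply]⟩
  choose φ hφ using fun g : closure S => hlift g g.2
  refine Nat.card_le_card_of_injective φ fun g₁ g₂ h => Subtype.ext (Equiv.ext fun x => hf ?_)
  rw [← hφ, ← hφ, h]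

/-- The points of the Fano plane as nonzero vectors of `𝔽₂³`: the powers `1, α, …, α⁶` in the
basis `1, α, α²` of `𝔽₈`, where `α ^ 3 = α + 1`. The rotation `i ↦ i + 1` then becomes
multiplication by `α`. -/
def fanoPoint : Fin 7 → Fin 3 → ZMod 2 :=
  ![![1, 0, 0], ![0, 1, 0], ![0, 0, 1], ![1, 1, 0], ![0, 1, 1], ![1, 1, 1], ![1, 0, 1]]

theorem fanoPoint_injective : fanoPoint.Injective := by
  decide

theorem card_closure_swap_mul_swap_finRotate_le :
    Nat.card (closure {Equiv.swap 0 1 * Equiv.swap 2 5, finRotate 7}) ≤ 168 := by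
  have hGL : Nat.card (GL (Fin 3) (ZMod 2)) = 168 := by
    rw [Matrix.card_GL_field, Fin.prod_univ_three, ZMod.card]
    rfl
  rw [← hGL]
  apply card_closure_le_of_forall_exists_smul_eq fanoPoint_injective
  rintro g (rfl | rfl)
  · exact ⟨.mkOfDetNeZero !![0, 1, 1; 1, 0, 1; 0, 0, 1] (by decide), by decide⟩
  · exact ⟨.mkOfDetNeZero !![0, 0, 1; 1, 0, 1; 0, 1, 0] (by decide), by decide⟩

/-- The permutations `a = (1 2)(3 6)` and `b = (1 2 3 4 5 6 7)` of a
seven-element set (here realized on `Fin 7`, with labels shifted by one)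
have orders 2 and 7, their product has order 3, and they generate a simple
group of cardinality 168. -/
theorem fox_example_237 :
    let a : Equiv.Perm (Fin 7) := Equiv.swap 0 1 * Equiv.swap 2 5
    let b : Equiv.Perm (Fin 7) := finRotate 7
    orderOf a = 2 ∧ orderOf b = 7 ∧ orderOf (a * b) = 3 ∧
      IsSimpleGroup (Subgroup.closure {a, b}) ∧
      Nat.card (Subgroup.closure {a, b}) = 168 := by
  intro a b
  have : Fact (Nat.Prime 7) := ⟨Nat.prime_seven⟩
  have ha : orderOf a = 2 := orderOf_eq_prime (by decide) (by decide)
  have hb : orderOf b = 7 := orderOf_eq_prime (by decide) (by decide)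
  have hab : orderOf (a * b) = 3 := orderOf_eq_prime (by decide) (by decide)
  have hsimple : IsSimpleGroup (closure {a, b}) :=
    isSimpleGroup_closure_pair (by rw [Nat.card_fin]; exact Nat.prime_seven)
      (by rw [hb, Nat.card_fin])
      (orderOf_dvd_iff_pow_eq_one.mp ha.dvd) (orderOf_dvd_iff_pow_eq_one.mp hab.dvd) (by norm_num)
  have ha_mem : a ∈ closure {a, b} := subset_closure (Set.mem_insert a {b})
  have hb_mem : b ∈ closure {a, b} := subset_closure (Set.mem_insert_of_mem a rfl)
  have h2 : 2 ∣ Nat.card (closure {a, b}) :=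
    ha.symm.dvd.trans (Subgroup.orderOf_dvd_natCard _ ha_mem)
  have h3 : 3 ∣ Nat.card (closure {a, b}) :=
    hab.symm.dvd.trans (Subgroup.orderOf_dvd_natCard _ (mul_mem ha_mem hb_mem))
  have h7 : 7 ∣ Nat.card (closure {a, b}) :=
    hb.symm.dvd.trans (Subgroup.orderOf_dvd_natCard _ hb_mem)
  exact ⟨ha, hb, hab, hsimple,
    card_eq_168_of_isSimpleGroup (by lia) card_closure_swap_mul_swap_finRotate_le⟩
end
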